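/- arXiv:0903.2864 — 2 statements merged into one kernel-verified Lean document; each statement's English description precedes it below -/
import Mathlib

section
/- Let n ≥ 7 and let x be a non-identity permutation in S_n. The permutation character of S_n acting by conjugation on the conjugacy class of x (equivalently, the permutation character of S_n on the cosets of the centralizer C_{S_n}(x)) is multiplicity-free if and only if x has one of the following cycle types: (i) x is a 2-cycle (cycle type (2,1^{n−2})); (ii) x is a 3-cycle (cycle type (3,1^{n−3})); (iii) x is an involution with at most one fixed point (cycle type (2^m) where n = 2m or n = 2m+1). -/
/-- The permutation character of `G` on the cosets of `H` is multiplicity-free: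
every irreducible complex representation of `G` has at most a one-dimensional
subspace of `H`-fixed vectors. -/
noncomputable def IsMultFree {G : Type} [Group G] (H : Subgroup G) : Prop :=
  ∀ V : FDRep ℂ G, CategoryTheory.Simple V →
    Module.finrank ℂ (Representation.invariants (V.ρ.comp H.subtype)) ≤ 1


open CategoryTheory in
theorem simple_sub {G : Type} [Group G] (V : FDRep ℂ G) (hV : Simple V)
    (W : Submodule ℂ V) (hW : ∀ g, ∀ v ∈ W, V.ρ g v ∈ W) : W = ⊥ ∨ W = ⊤ := by
  by_cases hb : W = ⊥
  · exact Or.inl hb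
  right
  let ρW : Representation ℂ G W := (Subrepresentation.mk (ρ := V.ρ) W (fun g v hv => hW g v hv)).toRepresentation
  let Y : FDRep ℂ G := FDRep.of ρW
  let ι : Y ⟶ V := ⟨InducedCategory.homMk (ModuleCat.ofHom W.subtype), fun g => by
    ext1
    rfl⟩
  have hinj : ∀ w : W, ι.hom.hom.hom w = (w : V) := fun w => rfl
  have hmono : Mono ι := by
    constructor
    intro Z f g h
    ext z
    have h2 := congrArg (fun k : Z ⟶ V => k.hom.hom.hom z) h
    exact h2
  have hne : ι ≠ 0 := by
    intro h
    apply hb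
    rw [Submodule.eq_bot_iff]
    intro w hw
    have h2 := congrArg (fun k : Y ⟶ V => k.hom.hom.hom (⟨w, hw⟩ : W)) h
    exact h2
  have hiso : IsIso ι := (Simple.mono_isIso_iff_nonzero ι).2 hne
  rw [eq_top_iff]
  intro v _
  have h3 : inv ι ≫ ι = 𝟙 V := by simp
  have h4 := congrArg (fun k : V ⟶ V => k.hom.hom.hom v) h3
  have h5 : (((inv ι).hom.hom.hom v : W) : V) = v := h4
  rw [← h5]
  exact Subtype.property _

open CategoryTheory in
theorem simple_of {G : Type} [Group G] [Finite G] {V : Type} [AddCommGroup V] [Module ℂ V]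
    [FiniteDimensional ℂ V] [Nontrivial V] (ρ : Representation ℂ G V)
    (h : ∀ W : Submodule ℂ V, (∀ g, ∀ v ∈ W, ρ g v ∈ W) → W = ⊥ ∨ W = ⊤) :
    Simple (FDRep.of ρ) := by
  have : NeZero (Nat.card G : ℂ) := ⟨by exact_mod_cast Nat.card_pos.ne'⟩
  rw [FDRep.simple_iff_end_is_rank_one]
  have hid : (𝟙 (FDRep.of ρ)) ≠ 0 := by
    intro h0
    obtain ⟨v, hv⟩ := exists_ne (0 : V)
    exact hv (congrArg (fun k : FDRep.of ρ ⟶ FDRep.of ρ => k.hom.hom.hom v) h0)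
  rw [finrank_eq_one_iff_of_nonzero' _ hid]
  intro f
  let F : V →ₗ[ℂ] V := f.hom.hom.hom
  have hF : ∀ g v, F (ρ g v) = ρ g (F v) := by
    intro g v
    have := f.comm g
    exact congrArg (fun k => k.hom.hom v) this
  obtain ⟨c, hc⟩ := Module.End.exists_eigenvalue F
  refine ⟨c, ?_⟩
  have h1 := h (Module.End.eigenspace F c) (by
    intro g v hv
    rw [Module.End.mem_eigenspace_iff] at hv ⊢
    rw [hF, hv, map_smul])
  have h2 := h1.resolve_left hc
  ext v
  have h3 : v ∈ Module.End.eigenspace F c := by rw [h2]; trivial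
  rw [Module.End.mem_eigenspace_iff] at h3
  exact h3.symm

theorem mf_rep {G : Type} [Group G] [Finite G] {H : Subgroup G} (hH : IsMultFree H)
    {V : Type} [AddCommGroup V] [Module ℂ V]
    [FiniteDimensional ℂ V] [Nontrivial V] (ρ : Representation ℂ G V)
    (h : ∀ W : Submodule ℂ V, (∀ g, ∀ v ∈ W, ρ g v ∈ W) → W = ⊥ ∨ W = ⊤) :
    Module.finrank ℂ (Representation.invariants (ρ.comp H.subtype)) ≤ 1 :=
  hH (FDRep.of ρ) (simple_of ρ h)

theorem mf_rep' {G : Type} [Group G] [Finite G] {H : Subgroup G} (hH : IsMultFree H)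
    {V : Type} [AddCommGroup V] [Module ℂ V]
    [FiniteDimensional ℂ V] [Nontrivial V] (ρ : Representation ℂ G V)
    (h : ∀ W : Submodule ℂ V, (∀ g, ∀ v ∈ W, ρ g v ∈ W) → W = ⊥ ∨ W = ⊤) :
    ∃ v : V, (∀ w, (∀ k ∈ H, ρ k w = w) → ∃ c : ℂ, w = c • v) := by
  obtain ⟨v, hv⟩ := finrank_le_one_iff.1 (mf_rep hH ρ h)
  refine ⟨v, fun w hw => ?_⟩
  obtain ⟨c, hc⟩ := hv ⟨w, fun k => hw k k.2⟩
  exact ⟨c, (congrArg Subtype.val hc).symm⟩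


/-- complex group algebra -/
abbrev CG (G : Type) [Group G] := MonoidAlgebra ℂ G

open scoped Classical in
/-- a multiplicity-free subgroup has commuting double cosets -/
theorem mf_comm {G : Type} [Group G] [Finite G] {H : Subgroup G} (hH : IsMultFree H) (g h : G) :
    ∃ a ∈ H, ∃ b ∈ H, ∃ c ∈ H, g * h = a * h * b * g * c := by
  have := Fintype.ofFinite G
  obtain ⟨δ, hδ⟩ : ∃ δ : G → CG G, ∀ g, δ g = MonoidAlgebra.single g 1 := ⟨_, fun _ => rfl⟩
  have δmul : ∀ a b, δ (a * b) = δ a * δ b := fun a b => by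
    simp [hδ, MonoidAlgebra.single_mul_single]
  obtain ⟨E, hEd⟩ : ∃ E : CG G, E = ∑ k : H, δ k := ⟨_, rfl⟩
  have hE : ∀ k ∈ H, δ k * E = E := by
    intro k hk
    simp only [hEd, Finset.mul_sum, ← δmul]
    exact Fintype.sum_equiv (Equiv.mulLeft (⟨k, hk⟩ : H)) _ _ (fun x => rfl)
  have key : ∀ S : Submodule (CG G) (CG G), IsSimpleModule (CG G) S → ∀ s : S,
      (E * δ g * E * δ h * E) • s = (E * δ h * E * δ g * E) • s := by
    intro S hS s
    have : FiniteDimensional ℂ S :=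
      inferInstanceAs (FiniteDimensional ℂ (S.restrictScalars ℂ))
    have : Nontrivial S := IsSimpleModule.nontrivial (CG G) S
    let ρ : Representation ℂ G S := Representation.ofModule' (k := ℂ) (G := G) S
    have hρ : ∀ g v, ρ g v = δ g • v := by
      intro g v
      rw [hδ]
      rfl
    obtain ⟨v, hv⟩ := mf_rep' hH ρ (by
      intro W hW
      let W' : Submodule (CG G) S :=
        { W with
          smul_mem' := by
            intro c v hv
            induction c using MonoidAlgebra.induction_linear with
            | zero => rw [zero_smul]; exact W.zero_mem
            | add x y hx hy => rw [add_smul]; exact W.add_mem hx hy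
            | single g a =>
              have : (MonoidAlgebra.single g a : CG G) = a • δ g := by
                simp [hδ, MonoidAlgebra.smul_single]
              rw [this, smul_assoc, ← hρ]
              exact W.smul_mem _ (hW g v hv) }
      rcases eq_bot_or_eq_top W' with h | h
      · left
        rw [Submodule.eq_bot_iff] at h ⊢
        exact h
      · right
        rw [Submodule.eq_top_iff'] at h ⊢
        exact h)
    have hinv : ∀ u : S, ∃ c : ℂ, E • u = c • v := by
      intro u
      exact hv (E • u) (fun k hk => by rw [hρ, ← mul_smul, hE _ hk])
    obtain ⟨c, hc⟩ := hinv s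
    obtain ⟨cg, hcg⟩ := hinv (δ g • v)
    obtain ⟨ch, hch⟩ := hinv (δ h • v)
    simp only [mul_smul, hc, hcg, hch, smul_comm (_ : (CG G)) (_ : ℂ)]
    rw [smul_comm ch cg]
  have key2 : ∀ s : (CG G), (E * δ g * E * δ h * E) • s = (E * δ h * E * δ g * E) • s := by
    intro s
    have htop : s ∈ sSup {m : Submodule (CG G) (CG G) | IsSimpleModule (CG G) m} := by
      have : NeZero (Nat.card G : ℂ) := ⟨by exact_mod_cast Nat.card_pos.ne'⟩
      rw [IsSemisimpleModule.sSup_simples_eq_top]; trivial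
    rw [sSup_eq_iSup'] at htop
    induction htop using Submodule.iSup_induction' with
    | mem i x hx =>
      have := key i.1 i.2 ⟨x, hx⟩
      exact congrArg Subtype.val this
    | zero => simp
    | add x y _ _ hx hy => rw [smul_add, hx, hy, smul_add]
  have key3 : E * δ g * E * δ h * E = E * δ h * E * δ g * E := by
    have := key2 1
    rwa [smul_eq_mul, mul_one, smul_eq_mul, mul_one] at this
  have expand : ∀ p q : G, E * δ p * E * δ q * E =
      ∑ a : H, ∑ b : H, ∑ c : H, δ (a * p * b * q * c) := by
    intro p q
    simp only [hEd, Finset.sum_mul, Finset.mul_sum, ← δmul]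
    rw [Finset.sum_comm]
    conv_rhs => rw [Finset.sum_comm]; enter [2, b]; rw [Finset.sum_comm]
  rw [expand, expand] at key3
  by_contra hcon
  push Not at hcon
  have h5 := congrArg (fun f : CG G => f.coeff (g * h)) key3
  simp only [MonoidAlgebra.coeff_sum, Finsupp.finsetSum_apply, hδ, MonoidAlgebra.coeff_single,
    Finsupp.single_apply] at h5
  have h6 : ∀ a b c : H, ¬ ((a : G) * h * b * g * c = g * h) := fun a b c h7 =>
    hcon a a.2 b b.2 c c.2 h7.symm
  simp only [h6, if_false, Finset.sum_const_zero] at h5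
  have h7 : ∑ a : H, ∑ b : H, ∑ c : H, (if (a : G) * g * b * h * c = g * h then 1 else 0 : ℕ) = 0 := by
    exact_mod_cast h5
  simp only [Finset.sum_eq_zero_iff] at h7
  have := h7 1 (Finset.mem_univ _) 1 (Finset.mem_univ _) 1 (Finset.mem_univ _)
  simp at this


open scoped Classical in
/-- Gelfand's trick -/
theorem gelfand {G : Type} [Group G] [Finite G] {H : Subgroup G}
    (hs : ∀ g : G, ∃ a ∈ H, ∃ b ∈ H, g⁻¹ = a * g * b) : IsMultFree H := by
  have := Fintype.ofFinite G
  intro V hV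
  obtain ⟨ρ, hρ⟩ : ∃ ρ : Representation ℂ G V, ρ = V.ρ := ⟨_, rfl⟩
  rw [← hρ]
  have hsub : ∀ W : Submodule ℂ V, (∀ g, ∀ v ∈ W, ρ g v ∈ W) → W = ⊥ ∨ W = ⊤ := by
    rw [hρ]; exact simple_sub V hV
  obtain ⟨E, hE⟩ : ∃ E : V →ₗ[ℂ] V, E = ∑ k : H, ρ k := ⟨_, rfl⟩
  have hEl : ∀ k ∈ H, ρ k * E = E := by
    intro k hk
    simp only [hE, Finset.mul_sum, ← map_mul]
    exact Fintype.sum_equiv (Equiv.mulLeft (⟨k, hk⟩ : H)) _ _ (fun x => rfl)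
  have hEr : ∀ k ∈ H, E * ρ k = E := by
    intro k hk
    simp only [hE, Finset.sum_mul, ← map_mul]
    exact Fintype.sum_equiv (Equiv.mulRight (⟨k, hk⟩ : H)) _ _ (fun x => rfl)
  have hsym : ∀ g, E * ρ g⁻¹ * E = E * ρ g * E := by
    intro g
    obtain ⟨a, ha, b, hb, h⟩ := hs g
    rw [h, map_mul, map_mul, ← mul_assoc, ← mul_assoc, hEr a ha, mul_assoc, hEl b hb]
  have hcomm : ∀ g h, E * ρ g * E * ρ h * E = E * ρ h * E * ρ g * E := by
    intro g h
    have h1 : E * ρ g * E * ρ h * E = E * ρ h⁻¹ * E * ρ g⁻¹ * E := by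
      have e1 : E * ρ g * E * ρ h * E = ∑ k : H, E * ρ (g * k * h) * E := by
        simp only [map_mul]
        rw [← Finset.sum_mul, ← Finset.mul_sum, ← Finset.sum_mul, ← Finset.mul_sum, ← hE]
        simp only [mul_assoc]
      have e2 : E * ρ h⁻¹ * E * ρ g⁻¹ * E = ∑ k : H, E * ρ (h⁻¹ * k * g⁻¹) * E := by
        simp only [map_mul]
        rw [← Finset.sum_mul, ← Finset.mul_sum, ← Finset.sum_mul, ← Finset.mul_sum, ← hE]
        simp only [mul_assoc]
      rw [e1, e2]
      refine Fintype.sum_equiv (Equiv.inv H) _ _ (fun k => ?_)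
      rw [← hsym]
      simp [mul_assoc]
    rw [h1]
    calc E * ρ h⁻¹ * E * ρ g⁻¹ * E = (E * ρ h⁻¹ * E) * ρ g⁻¹ * E := rfl
      _ = E * ρ h * (E * ρ g⁻¹ * E) := by rw [hsym]; simp only [mul_assoc]
      _ = _ := by rw [hsym]; simp only [mul_assoc]
  have hN0 : (Fintype.card H : ℂ) ≠ 0 := by exact_mod_cast Fintype.card_ne_zero
  obtain ⟨N, hN⟩ : ∃ N : ℂ, N = Fintype.card H := ⟨_, rfl⟩
  rw [← hN] at hN0
  have hEinv : ∀ w, (∀ k ∈ H, ρ k w = w) → E w = N • w := by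
    intro w hw
    rw [hE, LinearMap.sum_apply, Finset.sum_congr rfl (fun (k : H) _ => hw k k.2), Finset.sum_const,
      Finset.card_univ, hN, Nat.cast_smul_eq_nsmul]
  have hinvE : ∀ w, ∀ k ∈ H, ρ k (E w) = E w := fun w k hk =>
    congrArg (fun f : V →ₗ[ℂ] V => f w) (hEl k hk)
  have gen : ∀ w ≠ 0, ∀ W : Submodule ℂ V, (∀ g, ρ g w ∈ W) → W = ⊤ := by
    intro w hw W hW
    have h1 := hsub (Submodule.span ℂ (Set.range (fun g => ρ g w))) (by
      intro g v hv
      have : Submodule.span ℂ (Set.range (fun g => ρ g w)) ≤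
          (Submodule.span ℂ (Set.range (fun g => ρ g w))).comap (ρ g) := by
        rw [Submodule.span_le]
        rintro _ ⟨h, rfl⟩
        apply Submodule.subset_span
        exact ⟨g * h, by simp⟩
      exact this hv)
    have h2 : Submodule.span ℂ (Set.range (fun g => ρ g w)) ≠ ⊥ := by
      intro h
      rw [Submodule.eq_bot_iff] at h
      exact hw (h w (Submodule.subset_span ⟨1, by simp⟩))
    rw [eq_top_iff, ← h1.resolve_left h2, Submodule.span_le]
    rintro _ ⟨g, rfl⟩
    exact hW g
  obtain ⟨I, hI⟩ : ∃ I : Submodule ℂ V, I = Representation.invariants (ρ.comp H.subtype) := ⟨_, rfl⟩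
  have hImem : ∀ w, w ∈ I ↔ ∀ k ∈ H, ρ k w = w := by
    intro w
    rw [hI, Representation.mem_invariants]
    exact ⟨fun h k hk => h ⟨k, hk⟩, fun h k => h k k.2⟩
  rw [← hI]
  by_cases hbot : I = ⊥
  · rw [hbot, finrank_bot]; exact Nat.zero_le _
  have hnt : Nontrivial I := Submodule.nontrivial_iff_ne_bot.2 hbot
  have scal : ∀ g, ∃ c : ℂ, ∀ u, (E * ρ g * E) u = c • E u := by
    intro g
    let F : I →ₗ[ℂ] I := (E * ρ g).restrict (fun w _ => by
      rw [hImem]; intro k hk; exact hinvE _ k hk)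
    obtain ⟨c, hc⟩ := Module.End.exists_eigenvalue F
    obtain ⟨w, hw⟩ := hc.exists_hasEigenvector
    have hw1 : E (ρ g (w : V)) = c • (w : V) := congrArg Subtype.val hw.apply_eq_smul
    have hw0 : (w : V) ≠ 0 := fun h => hw.2 (Subtype.ext h)
    have hwI := (hImem _).1 w.2
    refine ⟨c, ?_⟩
    have := gen w hw0 (LinearMap.ker (E * ρ g * E - c • E)) (by
      intro h
      rw [LinearMap.mem_ker, LinearMap.sub_apply, sub_eq_zero, LinearMap.smul_apply]
      have h1 : (E * ρ g * E * ρ h * E) w = (E * ρ h * E * ρ g * E) w := by rw [hcomm]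
      simp only [Module.End.mul_apply, hEinv _ hwI, map_smul, hw1] at h1
      have h2 := smul_right_injective _ hN0 h1
      simp only [Module.End.mul_apply, h2])
    intro u
    have hu : u ∈ LinearMap.ker (E * ρ g * E - c • E) := by rw [this]; trivial
    rw [LinearMap.mem_ker, LinearMap.sub_apply, sub_eq_zero, LinearMap.smul_apply] at hu
    exact hu
  obtain ⟨w, hw⟩ := exists_ne (0 : I)
  have hw0 : (w : V) ≠ 0 := fun h => hw (Subtype.ext h)
  have hwI := (hImem _).1 w.2
  have htop := gen w hw0 ((Submodule.span ℂ {(w : V)}).comap E) (by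
    intro g
    obtain ⟨c, hc⟩ := scal g
    have := hc w
    simp only [Module.End.mul_apply, hEinv _ hwI, map_smul] at this
    rw [smul_comm] at this
    have h2 := smul_right_injective _ hN0 this
    rw [Submodule.mem_comap, h2]
    exact Submodule.smul_mem _ _ (Submodule.mem_span_singleton_self _))
  rw [finrank_le_one_iff]
  refine ⟨w, fun u => ?_⟩
  have hu : (u : V) ∈ (Submodule.span ℂ {(w : V)}).comap E := by rw [htop]; trivial
  rw [Submodule.mem_comap, hEinv _ ((hImem _).1 u.2), Submodule.mem_span_singleton] at hu
  obtain ⟨c, hc⟩ := hu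
  refine ⟨N⁻¹ * c, Subtype.ext ?_⟩
  change (N⁻¹ * c) • (w : V) = u
  rw [mul_smul, hc, smul_smul, inv_mul_cancel₀ hN0, one_smul]


theorem inv_swap {β : Type} (x y : Equiv.Perm β) (hx : x * x = 1) (hy : y * y = 1)
    (hxf : ∀ i, x i ≠ i) (hyf : ∀ i, y i ≠ i) (p : β) :
    ∃ σ : Equiv.Perm β, σ p = p ∧ (∀ i, σ (x i) = y (σ i)) ∧ ∀ i, σ (y i) = x (σ i) := by
  classical
  obtain ⟨r, hr⟩ : ∃ r, r = x * y := ⟨_, rfl⟩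
  have hxi : x⁻¹ = x := inv_eq_of_mul_eq_one_left hx
  have hyi : y⁻¹ = y := inv_eq_of_mul_eq_one_left hy
  have hri : r⁻¹ = y * x := by rw [hr, mul_inv_rev, hxi, hyi]
  have hxr : ∀ k : ℤ, x * r ^ k = r ^ (-k) * x := by
    intro k
    have : SemiconjBy x r r⁻¹ := by
      change x * r = r⁻¹ * x
      rw [hri, hr, mul_assoc, hx, ← mul_assoc, hx]; simp
    have := this.zpow_right k
    rw [inv_zpow, ← zpow_neg] at this
    exact this
  have hyr' : y = r ^ (-1 : ℤ) * x := by
    rw [zpow_neg_one, hri, mul_assoc, hx, mul_one]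
  have hyr : ∀ k : ℤ, y * r ^ k = r ^ (-k) * y := by
    intro k
    rw [hyr', mul_assoc, hxr, ← mul_assoc, ← mul_assoc, ← zpow_add, ← zpow_add, add_comm]
  have hxr1 : ∀ (k : ℤ) b, x ((r ^ k) b) = (r ^ (-k)) (x b) := fun k b =>
    congrArg (fun f : Equiv.Perm β => f b) (hxr k)
  have hyr1 : ∀ (k : ℤ) b, y ((r ^ k) b) = (r ^ (-k)) (y b) := fun k b =>
    congrArg (fun f : Equiv.Perm β => f b) (hyr k)
  have hadd : ∀ (k l : ℤ) b, (r ^ k) ((r ^ l) b) = (r ^ (k + l)) b := fun k l b => by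
    rw [zpow_add]; rfl
  have hyx : ∀ b, y b = (r ^ (-1 : ℤ)) (x b) := fun b =>
    congrArg (fun f : Equiv.Perm β => f b) hyr'
  have hxx : ∀ b, x (x b) = b := fun b => congrArg (fun f : Equiv.Perm β => f b) hx
  have nofix : ∀ (k : ℤ) b, (r ^ k) b ≠ x b := by
    intro k b h
    rcases Int.even_or_odd' k with ⟨m, hm | hm⟩
    · apply hxf ((r ^ m) b)
      rw [hxr1, ← h, hadd, hm]; congr 2; ring
    · apply hyf ((r ^ m) b)
      rw [hyr1, hyx, ← h, hadd, hadd, hm]; congr 2; ring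
  let R : β → β → Prop := fun u v => ∃ k : ℤ, v = (r ^ k) u ∨ v = (r ^ k) (x u)
  have hReq : Equivalence R := by
    refine ⟨fun u => ⟨0, Or.inl (by simp)⟩, ?_, ?_⟩
    · rintro u v ⟨k, h | h⟩
      · exact ⟨-k, Or.inl (by rw [h, hadd]; simp)⟩
      · exact ⟨k, Or.inr (by rw [h, hxr1, hadd, hxx]; simp)⟩
    · rintro u v w ⟨k, h | h⟩ ⟨l, h' | h'⟩
      · exact ⟨l + k, Or.inl (by rw [h', h, hadd])⟩
      · exact ⟨l - k, Or.inr (by rw [h', h, hxr1, hadd]; rfl)⟩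
      · exact ⟨l + k, Or.inr (by rw [h', h, hadd])⟩
      · exact ⟨l - k, Or.inl (by rw [h', h, hxr1, hadd, hxx]; rfl)⟩
  let S : Setoid β := ⟨R, hReq⟩
  let rep : β → β := fun u => if R u p then p else (Quotient.mk S u).out
  have hrep : ∀ u, R (rep u) u := by
    intro u
    by_cases h : R u p
    · simp only [rep, if_pos h]; exact hReq.symm h
    · simp only [rep, if_neg h]; exact Quotient.mk_out (s := S) u
  have hrep2 : ∀ u v, R u v → rep u = rep v := by
    intro u v h
    have h1 : R u p ↔ R v p := ⟨fun h2 => hReq.trans (hReq.symm h) h2, fun h2 => hReq.trans h h2⟩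
    have h2 : Quotient.mk S u = Quotient.mk S v := Quotient.sound h
    simp only [rep, h1, h2]
  have hrepp : rep p = p := by simp only [rep, if_pos (hReq.refl p)]
  let T : β → β → β → Prop := fun b u v =>
    ∃ k : ℤ, (u = (r ^ k) b ∧ v = (r ^ (-k)) b) ∨ (u = (r ^ k) (x b) ∧ v = (r ^ (-k)) (y b))
  have hTR : ∀ b u v, T b u v → R b u := by
    rintro b u v ⟨k, h | h⟩
    · exact ⟨k, Or.inl h.1⟩
    · exact ⟨k, Or.inr h.1⟩
  have hTsymm : ∀ b u v, T b u v → T b v u := by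
    rintro b u v ⟨k, h | h⟩
    · exact ⟨-k, Or.inl ⟨h.2, by rw [h.1]; simp⟩⟩
    · refine ⟨-k - 1, Or.inr ⟨by rw [h.2, hyx, hadd]; rfl, ?_⟩⟩
      rw [h.1, hyx, hadd]; congr 2; ring
  have e0 : ∀ (k l : ℤ) b c, (r ^ k) b = (r ^ l) c → b = (r ^ (l - k)) c := by
    intro k l b c h
    have := congrArg (r ^ (-k)) h
    rw [hadd, hadd] at this
    simp only [neg_add_cancel, zpow_zero, Equiv.Perm.one_apply] at this
    rw [this]; congr 2; ring
  have e1 : ∀ (k l : ℤ) b, (r ^ k) b = (r ^ l) b → (r ^ (-k)) b = (r ^ (-l)) b := by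
    intro k l b h
    have := congrArg (r ^ (-k - l)) h
    rw [hadd, hadd] at this
    ring_nf at this
    exact this.symm
  have hTfun : ∀ b u v w, T b u v → T b u w → v = w := by
    rintro b u v w ⟨k, ⟨h1, h2⟩ | ⟨h1, h2⟩⟩ ⟨l, ⟨h3, h4⟩ | ⟨h3, h4⟩⟩
    · rw [h1] at h3
      rw [h2, h4, e1 _ _ _ h3]
    · rw [h1] at h3
      have h5 := e0 _ _ _ _ h3.symm
      exact absurd h5.symm (nofix _ _)
    · rw [h1] at h3
      have h5 := e0 _ _ _ _ h3
      exact absurd h5.symm (nofix _ _)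
    · rw [h1] at h3
      have h5 := e1 _ _ _ h3
      have h6 := congrArg (r ^ (-1 : ℤ)) h5
      rw [hadd, hadd, add_comm, ← hadd, ← hyx, add_comm, ← hadd, ← hyx] at h6
      rw [h2, h4, h6]
  have hex : ∀ u, ∃ v, T (rep u) u v := by
    intro u
    obtain ⟨k, h | h⟩ := hrep u
    · exact ⟨_, k, Or.inl ⟨h, rfl⟩⟩
    · exact ⟨_, k, Or.inr ⟨h, rfl⟩⟩
  choose s hs using hex
  have hrs : ∀ u, rep (s u) = rep u := by
    intro u
    exact ((hrep2 _ _ (hTR _ _ _ (hTsymm _ _ _ (hs u)))).symm).trans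
      (hrep2 _ _ (hrep u))
  have hss : ∀ u, s (s u) = u := by
    intro u
    apply hTfun (rep u) (s u)
    · have := hs (s u); rwa [hrs] at this
    · exact hTsymm _ _ _ (hs u)
  have hTx : ∀ b u v, T b u v → T b (x u) (y v) := by
    rintro b u v ⟨k, ⟨h1, h2⟩ | ⟨h1, h2⟩⟩
    · exact ⟨-k, Or.inr ⟨by rw [h1, hxr1], by rw [h2, hyr1]⟩⟩
    · refine ⟨-k, Or.inl ⟨by rw [h1, hxr1, hxx], ?_⟩⟩
      rw [h2, hyr1]
      congr 1
      exact congrArg (fun f : Equiv.Perm β => f b) hy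
  have hsx : ∀ u, s (x u) = y (s u) := by
    intro u
    have h1 : rep (x u) = rep u := hrep2 _ _ ⟨0, Or.inr (by simp [hxx])⟩
    apply hTfun (rep u) (x u)
    · have := hs (x u); rwa [h1] at this
    · exact hTx _ _ _ (hs u)
  refine ⟨⟨s, s, hss, hss⟩, ?_, hsx, ?_⟩
  · apply hTfun p p
    · have := hs p; rwa [hrepp] at this
    · exact ⟨0, Or.inl (by simp)⟩
  · intro u
    change s (y u) = x (s u)
    have := hsx (s u)
    rw [hss] at this
    rw [← this, hss]


theorem mf_of_swap {n : ℕ} (x : Equiv.Perm (Fin n))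
    (h : ∀ y, IsConj x y → ∃ σ : Equiv.Perm (Fin n), (∀ i, σ (x i) = y (σ i)) ∧
      (∀ i, σ (y i) = x (σ i))) :
    IsMultFree (Subgroup.centralizer ({x} : Set (Equiv.Perm (Fin n)))) := by
  apply gelfand
  intro g
  obtain ⟨σ, h1, h2⟩ := h (g * x * g⁻¹) (isConj_iff.2 ⟨g, rfl⟩)
  have e1 : σ * x = g * x * g⁻¹ * σ := Equiv.ext h1
  have e2 : σ * (g * x * g⁻¹) = x * σ := Equiv.ext h2
  refine ⟨g⁻¹ * σ, ?_, (σ * g)⁻¹, ?_, by group⟩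
  · rw [Subgroup.mem_centralizer_singleton_iff]
    rw [mul_assoc, e1]; group
  · apply Subgroup.inv_mem
    rw [Subgroup.mem_centralizer_singleton_iff]
    calc σ * g * x = σ * (g * x * g⁻¹) * g := by group
      _ = _ := by rw [e2]; group

theorem mf_inv {n : ℕ} (x : Equiv.Perm (Fin n)) (m : ℕ)
    (hx : x.cycleType = Multiset.replicate m 2) (hn : n = 2 * m ∨ n = 2 * m + 1) :
    IsMultFree (Subgroup.centralizer ({x} : Set (Equiv.Perm (Fin n)))) := by
  have inv : ∀ y : Equiv.Perm (Fin n), y.cycleType = Multiset.replicate m 2 → y * y = 1 := by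
    intro y hy
    rw [← sq, ← orderOf_dvd_iff_pow_eq_one, ← Equiv.Perm.lcm_cycleType, hy, Multiset.lcm_dvd]
    intro b hb
    rw [Multiset.eq_of_mem_replicate hb]
  have supp : ∀ y : Equiv.Perm (Fin n), y.cycleType = Multiset.replicate m 2 →
      y.support.card = 2 * m := by
    intro y hy
    rw [← Equiv.Perm.sum_cycleType, hy]; simp [mul_comm]
  apply mf_of_swap
  intro y hxy
  have hy : y.cycleType = Multiset.replicate m 2 := by
    rw [← Equiv.Perm.isConj_iff_cycleType_eq.1 hxy, hx]
  rcases hn with hn | hn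
  · have nf : ∀ y : Equiv.Perm (Fin n), y.cycleType = Multiset.replicate m 2 → ∀ i, y i ≠ i := by
      intro y hy i
      have h1 : y.support = Finset.univ := by
        apply Finset.eq_univ_of_card
        rw [supp y hy, Fintype.card_fin, hn]
      rw [← Equiv.Perm.mem_support, h1]; simp
    rcases Nat.eq_zero_or_pos n with h0 | h0
    · subst h0
      exact ⟨1, fun i => i.elim0, fun i => i.elim0⟩
    · obtain ⟨σ, -, h1, h2⟩ := inv_swap x y (inv x hx) (inv y hy) (nf x hx) (nf y hy) ⟨0, h0⟩
      exact ⟨σ, h1, h2⟩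
  · have one : ∀ y : Equiv.Perm (Fin n), y.cycleType = Multiset.replicate m 2 →
        ∃ p, y p = p ∧ ∀ i, y i = i → i = p := by
      intro y hy
      have h1 : y.supportᶜ.card = 1 := by
        rw [Finset.card_compl, supp y hy, Fintype.card_fin, hn]; omega
      obtain ⟨p, hp⟩ := Finset.card_eq_one.1 h1
      have h2 : ∀ i, y i = i ↔ i = p := by
        intro i
        rw [← Finset.mem_singleton (a := p), ← hp, Finset.mem_compl, Equiv.Perm.notMem_support]
      exact ⟨p, (h2 p).2 rfl, fun i => (h2 i).1⟩
    have ext : ∀ y : Equiv.Perm (Fin n), y.cycleType = Multiset.replicate m 2 → ∀ p, y p = p →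
        (∀ i, y i = i → i = p) → ∃ Y : Equiv.Perm (Option (Fin n)), Y * Y = 1 ∧ (∀ i, Y i ≠ i) ∧
        Y none = some p ∧ Y (some p) = none ∧ ∀ i ≠ p, Y (some i) = some (y i) := by
      intro y hy p hp hp2
      have hyy : ∀ i, y (y i) = i := fun i => congrArg (fun f : Equiv.Perm (Fin n) => f i) (inv y hy)
      have a1 : (Equiv.optionCongr y * Equiv.swap none (some p)) none = some p := by
        simp [Equiv.Perm.mul_apply, hp]
      have a2 : (Equiv.optionCongr y * Equiv.swap none (some p)) (some p) = none := by
        simp [Equiv.Perm.mul_apply]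
      have a3 : ∀ i ≠ p, (Equiv.optionCongr y * Equiv.swap none (some p)) (some i) = some (y i) := by
        intro i hi
        simp [Equiv.Perm.mul_apply, Equiv.swap_apply_of_ne_of_ne, hi]
      refine ⟨_, ?_, ?_, a1, a2, a3⟩
      · ext1 i
        rw [Equiv.Perm.mul_apply, Equiv.Perm.one_apply]
        rcases i with _ | i
        · rw [a1, a2]
        · by_cases hi : i = p
          · rw [hi, a2, a1]
          · rw [a3 i hi, a3, hyy]
            intro h; apply hi; rw [← hyy i, h, hp]
      · intro i
        rcases i with _ | i
        · rw [a1]; simp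
        · by_cases hi : i = p
          · rw [hi, a2]; simp
          · rw [a3 i hi]; intro h; exact hi (hp2 i (Option.some_injective _ h))
    obtain ⟨p, hp, hp2⟩ := one x hx
    obtain ⟨q, hq, hq2⟩ := one y hy
    obtain ⟨X, x1, x2, x3, x4, x5⟩ := ext x hx p hp hp2
    obtain ⟨Y, y1, y2, y3, y4, y5⟩ := ext y hy q hq hq2
    obtain ⟨S, s1, s2, s3⟩ := inv_swap X Y x1 y1 x2 y2 none
    have hS : ∀ i, some (Equiv.removeNone S i) = S (some i) := by
      intro i
      apply Equiv.removeNone_some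
      have : S (some i) ≠ none := by
        rw [← s1]; intro h; exact absurd (S.injective h) (by simp)
      exact Option.ne_none_iff_exists'.1 this
    obtain ⟨σ, hσ⟩ : ∃ σ, σ = Equiv.removeNone S := ⟨_, rfl⟩
    rw [← hσ] at hS
    have hpq : σ p = q := by
      apply Option.some_injective
      rw [hS, ← x3, s2, s1, y3]
    have hqp : σ q = p := by
      apply Option.some_injective
      rw [hS, ← y3, s3, s1, x3]
    refine ⟨σ, fun i => ?_, fun i => ?_⟩
    · by_cases hi : i = p
      · rw [hi, hp, hpq, hq]
      · apply Option.some_injective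
        have : σ i ≠ q := by rw [← hpq]; exact fun h => hi (σ.injective h)
        rw [hS, ← x5 i hi, s2, ← hS, y5 _ this]
    · by_cases hi : i = q
      · rw [hi, hq, hqp, hp]
      · apply Option.some_injective
        have : σ i ≠ p := by rw [← hqp]; exact fun h => hi (σ.injective h)
        rw [hS, ← y5 i hi, s3, ← hS, x5 _ this]


/-- the two permutations are exchanged by conjugation -/
def Exch {n : ℕ} (x y : Equiv.Perm (Fin n)) : Prop :=
  ∃ σ : Equiv.Perm (Fin n), (∀ i, σ (x i) = y (σ i)) ∧ (∀ i, σ (y i) = x (σ i))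

theorem exch_swap {n : ℕ} {a b d e : Fin n} (σ : Equiv.Perm (Fin n)) (h1 : σ a = d) (h2 : σ b = e)
    (h3 : σ d = a) (h4 : σ e = b) : Exch (Equiv.swap a b) (Equiv.swap d e) := by
  refine ⟨σ, ?_, ?_⟩
  · have : σ * Equiv.swap a b = Equiv.swap d e * σ := by
      rw [← h1, ← h2, Equiv.swap_apply_apply]; simp
    exact fun i => congrArg (fun f : Equiv.Perm (Fin n) => f i) this
  · have : σ * Equiv.swap d e = Equiv.swap a b * σ := by
      rw [← h3, ← h4, Equiv.swap_apply_apply]; simp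
    exact fun i => congrArg (fun f : Equiv.Perm (Fin n) => f i) this

/-- the three-cycle a → b → c → a -/
def c3 {n : ℕ} (a b c : Fin n) : Equiv.Perm (Fin n) := Equiv.swap a b * Equiv.swap b c

theorem c3_rot {n : ℕ} {a b c : Fin n} (hab : a ≠ b) (hac : a ≠ c) (hbc : b ≠ c) : c3 a b c = c3 b c a := by
  ext1 i
  simp only [c3, Equiv.Perm.mul_apply, Equiv.swap_apply_def]
  grind

theorem c3_conj {n : ℕ} (σ : Equiv.Perm (Fin n)) (a b c : Fin n) :
    σ * c3 a b c = c3 (σ a) (σ b) (σ c) * σ := by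
  rw [c3, c3, Equiv.swap_apply_apply, Equiv.swap_apply_apply]; group

theorem exch_c3 {n : ℕ} {a b c d e f : Fin n} (σ : Equiv.Perm (Fin n)) (h1 : σ a = d) (h2 : σ b = e)
    (h5 : σ c = f) (h3 : σ d = a) (h4 : σ e = b) (h6 : σ f = c) : Exch (c3 a b c) (c3 d e f) := by
  refine ⟨σ, ?_, ?_⟩
  · have := c3_conj σ a b c
    rw [h1, h2, h5] at this
    exact fun i => congrArg (fun f : Equiv.Perm (Fin n) => f i) this
  · have := c3_conj σ d e f
    rw [h3, h4, h6] at this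
    exact fun i => congrArg (fun f : Equiv.Perm (Fin n) => f i) this

theorem exch_c3_common {n : ℕ} {a b c e f : Fin n} (hab : a ≠ b) (hac : a ≠ c) (hbc : b ≠ c)
    (hae : a ≠ e) (haf : a ≠ f) (hef : e ≠ f) : Exch (c3 a b c) (c3 a e f) := by
  by_cases h1 : b = e
  · subst h1
    exact exch_c3 (Equiv.swap c f) (by grind) (by grind) (by grind) (by grind) (by grind) (by grind)
  by_cases h2 : b = f
  · subst h2
    by_cases h3 : c = e
    · subst h3
      exact exch_c3 (Equiv.swap b c) (by grind) (by grind) (by grind) (by grind) (by grind) (by grind)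
    rw [c3_rot hae haf hef, c3_rot hef hae.symm haf.symm]
    exact exch_c3 (Equiv.swap a b * Equiv.swap c e) (by simp only [Equiv.Perm.mul_apply, Equiv.swap_apply_def]; grind) (by simp only [Equiv.Perm.mul_apply, Equiv.swap_apply_def]; grind) (by simp only [Equiv.Perm.mul_apply, Equiv.swap_apply_def]; grind) (by simp only [Equiv.Perm.mul_apply, Equiv.swap_apply_def]; grind) (by simp only [Equiv.Perm.mul_apply, Equiv.swap_apply_def]; grind) (by simp only [Equiv.Perm.mul_apply, Equiv.swap_apply_def]; grind)
  by_cases h3 : c = e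
  · subst h3
    rw [c3_rot hab hac hbc, c3_rot hbc hab.symm hac.symm]
    exact exch_c3 (Equiv.swap a c * Equiv.swap b f) (by simp only [Equiv.Perm.mul_apply, Equiv.swap_apply_def]; grind) (by simp only [Equiv.Perm.mul_apply, Equiv.swap_apply_def]; grind) (by simp only [Equiv.Perm.mul_apply, Equiv.swap_apply_def]; grind) (by simp only [Equiv.Perm.mul_apply, Equiv.swap_apply_def]; grind) (by simp only [Equiv.Perm.mul_apply, Equiv.swap_apply_def]; grind) (by simp only [Equiv.Perm.mul_apply, Equiv.swap_apply_def]; grind)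
  by_cases h4 : c = f
  · subst h4
    exact exch_c3 (Equiv.swap b e) (by grind) (by grind) (by grind) (by grind) (by grind) (by grind)
  exact exch_c3 (Equiv.swap b e * Equiv.swap c f) (by simp only [Equiv.Perm.mul_apply, Equiv.swap_apply_def]; grind) (by simp only [Equiv.Perm.mul_apply, Equiv.swap_apply_def]; grind) (by simp only [Equiv.Perm.mul_apply, Equiv.swap_apply_def]; grind) (by simp only [Equiv.Perm.mul_apply, Equiv.swap_apply_def]; grind) (by simp only [Equiv.Perm.mul_apply, Equiv.swap_apply_def]; grind) (by simp only [Equiv.Perm.mul_apply, Equiv.swap_apply_def]; grind)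

theorem exch_c3_all {n : ℕ} {a b c d e f : Fin n} (hab : a ≠ b) (hac : a ≠ c) (hbc : b ≠ c)
    (hde : d ≠ e) (hdf : d ≠ f) (hef : e ≠ f) : Exch (c3 a b c) (c3 d e f) := by
  have step : ∀ {a b c : Fin n}, a ≠ b → a ≠ c → b ≠ c → (a = d ∨ a = e ∨ a = f) →
      Exch (c3 a b c) (c3 d e f) := by
    intro a b c hab hac hbc h
    rcases h with h | h | h
    · subst h; exact exch_c3_common hab hac hbc hde hdf hef
    · subst h; rw [c3_rot hde hdf hef]
      exact exch_c3_common hab hac hbc hef hde.symm hdf.symm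
    · subst h; rw [c3_rot hde hdf hef, c3_rot hef hde.symm hdf.symm]
      exact exch_c3_common hab hac hbc hdf.symm hef.symm hde
  by_cases h1 : a = d ∨ a = e ∨ a = f
  · exact step hab hac hbc h1
  by_cases h2 : b = d ∨ b = e ∨ b = f
  · rw [c3_rot hab hac hbc]; exact step hbc hab.symm hac.symm h2
  by_cases h3 : c = d ∨ c = e ∨ c = f
  · rw [c3_rot hab hac hbc, c3_rot hbc hab.symm hac.symm]; exact step hac.symm hbc.symm hab h3
  push Not at h1 h2 h3
  exact exch_c3 (Equiv.swap a d * Equiv.swap b e * Equiv.swap c f)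
    (by simp only [Equiv.Perm.mul_apply, Equiv.swap_apply_def]; grind) (by simp only [Equiv.Perm.mul_apply, Equiv.swap_apply_def]; grind) (by simp only [Equiv.Perm.mul_apply, Equiv.swap_apply_def]; grind) (by simp only [Equiv.Perm.mul_apply, Equiv.swap_apply_def]; grind) (by simp only [Equiv.Perm.mul_apply, Equiv.swap_apply_def]; grind) (by simp only [Equiv.Perm.mul_apply, Equiv.swap_apply_def]; grind)

theorem mf_two {n : ℕ} (x : Equiv.Perm (Fin n)) (hx : x.cycleType = {2}) :
    IsMultFree (Subgroup.centralizer ({x} : Set (Equiv.Perm (Fin n)))) := by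
  apply mf_of_swap
  intro y hxy
  have hy : y.cycleType = {2} := by rw [← Equiv.Perm.isConj_iff_cycleType_eq.1 hxy, hx]
  have key : ∀ y : Equiv.Perm (Fin n), y.cycleType = {2} → ∃ a b, a ≠ b ∧ y = Equiv.swap a b := by
    intro y hy
    exact Equiv.Perm.card_support_eq_two.1 (by rw [← Equiv.Perm.sum_cycleType, hy]; rfl)
  obtain ⟨a, b, hab, rfl⟩ := key x hx
  obtain ⟨d, e, hde, rfl⟩ := key y hy
  clear hx hy hxy key
  change Exch _ _
  by_cases h1 : a = d
  · subst h1
    exact exch_swap (Equiv.swap b e) (by grind) (by grind) (by grind) (by grind)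
  by_cases h2 : a = e
  · subst h2
    rw [Equiv.swap_comm d a]
    exact exch_swap (Equiv.swap b d) (by grind) (by grind) (by grind) (by grind)
  by_cases h3 : b = d
  · subst h3
    rw [Equiv.swap_comm b e]
    exact exch_swap (Equiv.swap a e) (by grind) (by grind) (by grind) (by grind)
  by_cases h4 : b = e
  · subst h4
    exact exch_swap (Equiv.swap a d) (by grind) (by grind) (by grind) (by grind)
  exact exch_swap (Equiv.swap a d * Equiv.swap b e) (by simp only [Equiv.Perm.mul_apply, Equiv.swap_apply_def]; grind) (by simp only [Equiv.Perm.mul_apply, Equiv.swap_apply_def]; grind) (by simp only [Equiv.Perm.mul_apply, Equiv.swap_apply_def]; grind) (by simp only [Equiv.Perm.mul_apply, Equiv.swap_apply_def]; grind)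

theorem is_c3 {n : ℕ} (y : Equiv.Perm (Fin n)) (hy : y.cycleType = {3}) :
    ∃ a b c, a ≠ b ∧ a ≠ c ∧ b ≠ c ∧ y = c3 a b c := by
  have h3 : y.IsThreeCycle := hy
  have hne : ∃ a, y a ≠ a := by
    by_contra h
    push Not at h
    have : y = 1 := Equiv.ext h
    rw [this] at hy
    simp at hy
  obtain ⟨a, ha⟩ := hne
  have ho : y ^ 3 = 1 := by rw [← h3.orderOf]; exact pow_orderOf_eq_one y
  have hy3 : ∀ i, y (y (y i)) = i := fun i => congrArg (fun f : Equiv.Perm (Fin n) => f i) ho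
  have h1 : y a ≠ y (y a) := fun h => ha (y.injective h).symm
  have h2 : a ≠ y (y a) := by
    intro h
    have := hy3 a
    rw [← h] at this
    exact ha this
  refine ⟨a, y a, y (y a), ha.symm, h2, h1, ?_⟩
  have hsub : ({a, y a, y (y a)} : Finset (Fin n)) = y.support := by
    apply Finset.eq_of_subset_of_card_le
    · intro i hi
      simp only [Finset.mem_insert, Finset.mem_singleton] at hi
      rw [Equiv.Perm.mem_support]
      rcases hi with rfl | rfl | rfl
      · exact ha
      · exact h1.symm
      · rw [hy3]; exact h2
    · rw [h3.card_support, Finset.card_eq_three.2 ⟨a, y a, y (y a), ha.symm, h2, h1, rfl⟩]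
  ext1 i
  by_cases hi : i ∈ y.support
  · rw [← hsub] at hi
    simp only [Finset.mem_insert, Finset.mem_singleton] at hi
    have := hy3 a
    rcases hi with rfl | rfl | rfl <;> simp only [c3, Equiv.Perm.mul_apply, Equiv.swap_apply_def] <;> grind
  · have h5 := hi
    rw [Equiv.Perm.notMem_support] at hi
    rw [← hsub] at h5
    simp only [Finset.mem_insert, Finset.mem_singleton] at h5
    simp only [c3, Equiv.Perm.mul_apply, Equiv.swap_apply_def]
    grind

theorem mf_three {n : ℕ} (x : Equiv.Perm (Fin n)) (hx : x.cycleType = {3}) :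
    IsMultFree (Subgroup.centralizer ({x} : Set (Equiv.Perm (Fin n)))) := by
  apply mf_of_swap
  intro y hxy
  have hy : y.cycleType = {3} := by rw [← Equiv.Perm.isConj_iff_cycleType_eq.1 hxy, hx]
  obtain ⟨a, b, c, h1, h2, h3, rfl⟩ := is_c3 x hx
  obtain ⟨d, e, f, h4, h5, h6, rfl⟩ := is_c3 y hy
  exact exch_c3_all h1 h2 h3 h4 h5 h6


/-- symmetric, zero-diagonal arrays with zero row sums -/
def VV (n : ℕ) : Submodule ℂ (EuclideanSpace ℂ (Fin n × Fin n)) where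
  carrier := {f | (∀ i j, f (i, j) = f (j, i)) ∧ (∀ i, f (i, i) = 0) ∧ ∀ i, ∑ j, f (i, j) = 0}
  add_mem' := by
    rintro f g ⟨h1, h2, h3⟩ ⟨h4, h5, h6⟩
    refine ⟨fun i j => ?_, fun i => ?_, fun i => ?_⟩
    · simp only [PiLp.add_apply]; rw [h1, h4]
    · simp only [PiLp.add_apply]; rw [h2, h5, add_zero]
    · simp only [PiLp.add_apply]; rw [Finset.sum_add_distrib, h3, h6, add_zero]
  zero_mem' := by simp
  smul_mem' := by
    rintro c f ⟨h1, h2, h3⟩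
    refine ⟨fun i j => ?_, fun i => ?_, fun i => ?_⟩
    · simp only [PiLp.smul_apply]; rw [h1]
    · simp only [PiLp.smul_apply]; rw [h2, smul_zero]
    · simp only [PiLp.smul_apply]; rw [← Finset.smul_sum, h3, smul_zero]

/-- the action on arrays -/
def actL {n : ℕ} (g : Equiv.Perm (Fin n)) :
    EuclideanSpace ℂ (Fin n × Fin n) →ₗ[ℂ] EuclideanSpace ℂ (Fin n × Fin n) where
  toFun f := WithLp.toLp 2 (fun p => f (g⁻¹ p.1, g⁻¹ p.2))
  map_add' f h := by ext p; simp
  map_smul' c f := by ext p; simp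

theorem actL_apply {n : ℕ} (g : Equiv.Perm (Fin n)) (f) (i j : Fin n) :
    actL g f (i, j) = f (g⁻¹ i, g⁻¹ j) := rfl

theorem actL_mem {n : ℕ} (g : Equiv.Perm (Fin n)) (f) (hf : f ∈ VV n) : actL g f ∈ VV n := by
  obtain ⟨h1, h2, h3⟩ := hf
  refine ⟨fun i j => ?_, fun i => ?_, fun i => ?_⟩
  · simp only [actL_apply]; rw [h1]
  · simp only [actL_apply]; rw [h2]
  · simp only [actL_apply]
    rw [Equiv.sum_comp (g⁻¹) (fun j => f (g⁻¹ i, j)), h3]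

/-- the representation on `VV` -/
def rhoV (n : ℕ) : Representation ℂ (Equiv.Perm (Fin n)) (VV n) where
  toFun g := (actL g).restrict (actL_mem g)
  map_one' := by ext f p; rfl
  map_mul' g h := by ext f p; rfl

theorem rhoV_apply {n : ℕ} (g : Equiv.Perm (Fin n)) (f : VV n) (i j : Fin n) :
    (rhoV n g f : EuclideanSpace ℂ (Fin n × Fin n)) (i, j) = f.1 (g⁻¹ i, g⁻¹ j) := rfl

theorem VV_zero {n : ℕ} (hn : 4 ≤ n) (f) (hf : f ∈ VV n)
    (h : ∀ i j k l : Fin n, i ≠ j → i ≠ k → i ≠ l → j ≠ k → j ≠ l → k ≠ l →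
      f (i, k) - f (j, k) - f (i, l) + f (j, l) = 0) : f = 0 := by
  obtain ⟨h1, h2, h3⟩ := hf
  have hn' : ((n : ℂ) - 2) ≠ 0 := by
    have : (n : ℂ) ≠ ((2 : ℕ) : ℂ) := by rw [Ne, Nat.cast_inj]; omega
    rw [sub_ne_zero]; exact_mod_cast this
  have hn1 : ((n : ℂ) - 1) ≠ 0 := by
    have : (n : ℂ) ≠ ((1 : ℕ) : ℂ) := by rw [Ne, Nat.cast_inj]; omega
    rw [sub_ne_zero]; exact_mod_cast this
  have key : ∀ i j k : Fin n, i ≠ j → i ≠ k → j ≠ k → f (i, k) = f (j, k) := by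
    intro i j k hij hik hjk
    have h4 : ∑ l, (f (i, l) - f (j, l)) = 0 := by
      rw [Finset.sum_sub_distrib, h3, h3, sub_zero]
    have h5 : ∑ l, (f (i, l) - f (j, l)) = ((n : ℂ) - 2) * (f (i, k) - f (j, k)) := by
      have hd : ∀ l, f (i, l) - f (j, l) = (f (i, k) - f (j, k)) +
          (if l = i then (f (i, i) - f (j, i)) - (f (i, k) - f (j, k)) else 0) +
          (if l = j then (f (i, j) - f (j, j)) - (f (i, k) - f (j, k)) else 0) := by
        intro l
        by_cases hli : l = i
        · subst hli; simp [hij]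
        by_cases hlj : l = j
        · subst hlj; simp [hij.symm]
        by_cases hlk : l = k
        · subst hlk; simp [hli, hlj]
        have := h i j k l hij hik (Ne.symm hli) hjk (Ne.symm hlj) (Ne.symm hlk)
        simp only [hli, hlj, if_false]
        linear_combination -this
      rw [Finset.sum_congr rfl (fun l _ => hd l)]
      simp only [Finset.sum_add_distrib, Finset.sum_ite_eq', Finset.mem_univ, if_true, Finset.sum_const,
        Finset.card_univ, Fintype.card_fin, nsmul_eq_mul]
      rw [h2, h2, h1 i j]; ring
    rw [h4] at h5
    have := (mul_eq_zero.1 h5.symm).resolve_left hn'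
    exact sub_eq_zero.1 this
  ext ⟨i, k⟩
  simp only [PiLp.zero_apply]
  by_cases hik : i = k
  · subst hik; exact h2 i
  have h4 := h3 k
  have hd : ∀ l, f (k, l) = f (k, i) + (if l = k then - f (k, i) else 0) := by
    intro l
    by_cases hlk : l = k
    · subst hlk; simp [h2]
    by_cases hli : l = i
    · subst hli; simp [hlk]
    rw [h1 k l, h1 k i, key l i k hli hlk hik]; simp [hlk]
  rw [Finset.sum_congr rfl (fun l _ => hd l)] at h4
  simp only [Finset.sum_add_distrib, Finset.sum_ite_eq', Finset.mem_univ, if_true, Finset.sum_const,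
        Finset.card_univ, Fintype.card_fin, nsmul_eq_mul] at h4
  have h5 : ((n : ℂ) - 1) * f (k, i) = 0 := by linear_combination h4
  rw [h1]
  exact (mul_eq_zero.1 h5).resolve_left hn1

/-- polytabloid -/
def PT {n : ℕ} (i j k l : Fin n) : EuclideanSpace ℂ (Fin n × Fin n) :=
  WithLp.toLp 2 (fun p => ((if p.1 = i then 1 else 0) - (if p.1 = j then 1 else 0)) *
      ((if p.2 = k then 1 else 0) - (if p.2 = l then 1 else 0)) +
    ((if p.2 = i then 1 else 0) - (if p.2 = j then 1 else 0)) *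
      ((if p.1 = k then 1 else 0) - (if p.1 = l then 1 else 0)))

theorem PT_apply {n : ℕ} (i j k l a b : Fin n) : PT i j k l (a, b) =
    ((if a = i then 1 else 0) - (if a = j then 1 else 0)) *
      ((if b = k then 1 else 0) - (if b = l then 1 else 0)) +
    ((if b = i then 1 else 0) - (if b = j then 1 else 0)) *
      ((if a = k then 1 else 0) - (if a = l then 1 else 0)) := rfl

theorem PT_mem {n : ℕ} {i j k l : Fin n} (h : i ≠ k) (h2 : i ≠ l) (h3 : j ≠ k) (h4 : j ≠ l) : PT i j k l ∈ VV n := by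
  refine ⟨fun a b => ?_, fun a => ?_, fun a => ?_⟩
  · simp only [PT_apply]; ring
  · simp only [PT_apply]
    by_cases h5 : a = i
    · subst h5; simp [h, h2]
    by_cases h6 : a = j
    · subst h6; simp [h3, h4]
    simp [h5, h6]
  · simp only [PT_apply]
    rw [Finset.sum_add_distrib, ← Finset.mul_sum, ← Finset.sum_mul]
    simp

theorem PT_act {n : ℕ} (g : Equiv.Perm (Fin n)) (i j k l : Fin n) :
    actL g (PT i j k l) = PT (g i) (g j) (g k) (g l) := by
  ext ⟨a, b⟩
  rw [actL_apply]
  have e : ∀ a i, (g⁻¹ a = i) = (a = g i) := fun a i => by rw [Equiv.Perm.inv_eq_iff_eq]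
  simp only [PT_apply, e]

theorem PT_diff {n : ℕ} {i j k l : Fin n} (hij : i ≠ j) (h : i ≠ k) (h2 : i ≠ l) (h3 : j ≠ k) (h4 : j ≠ l)
    (hkl : k ≠ l) (f) (hf : f ∈ VV n) :
    f - actL (Equiv.swap i j) f - actL (Equiv.swap k l) f + actL (Equiv.swap i j * Equiv.swap k l) f =
      (f (i, k) - f (j, k) - f (i, l) + f (j, l)) • PT i j k l := by
  obtain ⟨h1, h0, -⟩ := hf
  ext ⟨a, b⟩
  simp only [PiLp.add_apply, PiLp.sub_apply, PiLp.smul_apply, actL_apply, PT_apply, mul_inv_rev, Equiv.swap_inv,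
    Equiv.Perm.mul_apply, Equiv.swap_apply_def, smul_eq_mul]
  have e1 := h1 i j
  have e2 := h1 i k
  have e3 := h1 i l
  have e4 := h1 j k
  have e5 := h1 j l
  have e6 := h1 k l
  have z1 := h0 i
  have z2 := h0 j
  have z3 := h0 k
  have z4 := h0 l
  clear h0 h1
  by_cases ai : a = i <;> by_cases aj : a = j <;> by_cases ak : a = k <;> by_cases al : a = l <;>
  by_cases bi : b = i <;> by_cases bj : b = j <;> by_cases bk : b = k <;> by_cases bl : b = l <;>
  first
  | (exfalso; grind)
  | (simp only [ai, aj, ak, al, bi, bj, bk, bl, hij, h, h2, h3, h4, hkl, hij.symm, h.symm, h2.symm, h3.symm,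
      h4.symm, hkl.symm, if_true, if_false]; grind)


theorem perm4 {n : ℕ} {i j k l i' j' k' l' : Fin n} (h1 : i ≠ j) (h2 : i ≠ k) (h3 : i ≠ l) (h4 : j ≠ k)
    (h5 : j ≠ l) (h6 : k ≠ l) (h1' : i' ≠ j') (h2' : i' ≠ k') (h3' : i' ≠ l') (h4' : j' ≠ k')
    (h5' : j' ≠ l') (h6' : k' ≠ l') :
    ∃ g : Equiv.Perm (Fin n), g i = i' ∧ g j = j' ∧ g k = k' ∧ g l = l' := by
  have hp : MulAction.IsMultiplyPretransitive (Equiv.Perm (Fin n)) (Fin n) 4 :=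
    Equiv.Perm.isMultiplyPretransitive (Fin n) 4
  have ha : Function.Injective ![i, j, k, l] := by
    intro a b hab
    fin_cases a <;> fin_cases b <;> simp_all
  have hb : Function.Injective ![i', j', k', l'] := by
    intro a b hab
    fin_cases a <;> fin_cases b <;> simp_all
  obtain ⟨g, hg⟩ := hp.exists_smul_eq ⟨_, ha⟩ ⟨_, hb⟩
  have := fun t => congrArg (fun f : Fin 4 ↪ Fin n => f t) hg
  exact ⟨g, this 0, this 1, this 2, this 3⟩

theorem VV_irr {n : ℕ} (hn : 4 ≤ n) (W : Submodule ℂ (VV n)) (hW : ∀ g, ∀ v ∈ W, rhoV n g v ∈ W) :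
    W = ⊥ ∨ W = ⊤ := by
  by_cases hb : W = ⊥
  · exact Or.inl hb
  right
  obtain ⟨f, hfW, hf0⟩ := W.ne_bot_iff.1 hb
  have hne : ∃ i j k l : Fin n, i ≠ j ∧ i ≠ k ∧ i ≠ l ∧ j ≠ k ∧ j ≠ l ∧ k ≠ l ∧
      f.1 (i, k) - f.1 (j, k) - f.1 (i, l) + f.1 (j, l) ≠ 0 := by
    by_contra hc
    push Not at hc
    exact hf0 (Subtype.ext (VV_zero hn f.1 f.2 hc))
  obtain ⟨i, j, k, l, h1, h2, h3, h4, h5, h6, hc⟩ := hne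
  have hP : (⟨PT i j k l, PT_mem h2 h3 h4 h5⟩ : VV n) ∈ W := by
    have hd := PT_diff h1 h2 h3 h4 h5 h6 f.1 f.2
    have hm : f - rhoV n (Equiv.swap i j) f - rhoV n (Equiv.swap k l) f +
        rhoV n (Equiv.swap i j * Equiv.swap k l) f ∈ W :=
      W.add_mem (W.sub_mem (W.sub_mem hfW (hW _ _ hfW)) (hW _ _ hfW)) (hW _ _ hfW)
    rw [← W.smul_mem_iff hc]
    convert hm using 1
    exact Subtype.ext hd.symm
  refine (Submodule.orthogonal_eq_bot_iff (𝕜 := ℂ) (E := VV n) (K := W)).1 ?_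
  rw [Submodule.eq_bot_iff]
  intro u hu
  apply Subtype.ext
  apply VV_zero hn u.1 u.2
  intro a b c d g1 g2 g3 g4 g5 g6
  obtain ⟨g, e1, e2, e3, e4⟩ := perm4 h1 h2 h3 h4 h5 h6 g1 g2 g3 g4 g5 g6
  have hP' := hW g _ hP
  have := hu _ hP'
  rw [Submodule.coe_inner] at this
  change inner ℂ (actL g (PT i j k l)) u.1 = 0 at this
  rw [PT_act, e1, e2, e3, e4, PiLp.inner_apply, Fintype.sum_prod_type] at this
  simp only [RCLike.inner_apply, PT_apply, map_add, map_sub, map_mul, apply_ite (starRingEnd ℂ), map_one, map_zero] at this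
  obtain ⟨s1, -⟩ := u.2
  simp only [mul_add, mul_sub, sub_mul, Finset.sum_add_distrib, Finset.sum_sub_distrib, mul_ite, ite_mul,
    mul_one, mul_zero, one_mul, zero_mul, Finset.sum_ite_eq', Finset.mem_univ, if_true, Finset.sum_ite_irrel,
    Finset.sum_const_zero] at this
  rw [s1 c a, s1 d a, s1 c b, s1 d b] at this
  have h2' : (2 : ℂ) * (u.1 (a, c) - u.1 (b, c) - u.1 (a, d) + u.1 (b, d)) = 0 := by
    linear_combination this
  simpa using h2'

theorem pair_lemma {n : ℕ} (hn : 4 ≤ n) {H : Subgroup (Equiv.Perm (Fin n))} (hH : IsMultFree H)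
    {Γ : Type} (col : Fin n → Fin n → Γ) (hs : ∀ i j, col i j = col j i)
    (hc : ∀ h ∈ H, ∀ i j, col (h i) (h j) = col i j) (r : ℕ) (rep : Fin r → Fin n)
    (hrep : ∀ i, ∃ t, ∃ h ∈ H, h (rep t) = i) (P Q : Fin (r + 2) → Fin n)
    (hPQ : ∀ t, P t ≠ Q t) (hd : ∀ s t, col (P s) (Q s) = col (P t) (Q t) → s = t) : False := by
  classical
  have hnt : Nontrivial (VV n) := by
    have h01 : PT (n := n) ⟨0, by omega⟩ ⟨1, by omega⟩ ⟨2, by omega⟩ ⟨3, by omega⟩ ∈ VV n := 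
      PT_mem (by simp) (by simp) (by simp) (by simp)
    refine ⟨⟨⟨_, h01⟩, 0, ?_⟩⟩
    intro h
    have := congrArg (fun f : VV n => f.1 (⟨0, by omega⟩, ⟨2, by omega⟩)) h
    simp [PT_apply] at this
  obtain ⟨v, hv⟩ := mf_rep' hH (rhoV n) (VV_irr hn)
  let E : Fin (r + 2) → Fin n → Fin n → ℂ := fun t i j =>
    if i ≠ j ∧ col i j = col (P t) (Q t) then 1 else 0
  have hEinv : ∀ h ∈ H, ∀ t i j, E t (h i) (h j) = E t i j := by
    intro h hh t i j
    simp only [E, hc h hh, Ne, EmbeddingLike.apply_eq_iff_eq]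
  let M : (Fin (r + 2) → ℂ) →ₗ[ℂ] (Fin r → ℂ) :=
    { toFun := fun z s => ∑ t, z t * ∑ j, E t (rep s) j
      map_add' := by
        intro z w; ext s; simp [add_mul, Finset.sum_add_distrib]
      map_smul' := by
        intro c z; ext s; simp [mul_assoc, Finset.mul_sum] }
  have hker : 2 ≤ Module.finrank ℂ (LinearMap.ker M) := by
    have h1 := LinearMap.finrank_range_add_finrank_ker M
    have h2 := Submodule.finrank_le (LinearMap.range M)
    simp only [Module.finrank_fin_fun] at h1 h2
    omega
  let F : (Fin (r + 2) → ℂ) → EuclideanSpace ℂ (Fin n × Fin n) := fun z =>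
    WithLp.toLp 2 (fun p => ∑ t, z t * E t p.1 p.2)
  have hF : ∀ z i j, F z (i, j) = ∑ t, z t * E t i j := fun _ _ _ => rfl
  have hFP : ∀ z t, F z (P t, Q t) = z t := by
    intro z t
    rw [hF, Finset.sum_eq_single t]
    · simp [E, hPQ t]
    · intro s _ hst
      have : ¬ col (P t) (Q t) = col (P s) (Q s) := fun h => hst (hd _ _ h.symm)
      simp [E, this]
    · simp
  have hFinv : ∀ h ∈ H, ∀ z i j, F z (h i, h j) = F z (i, j) := by
    intro h hh z i j
    simp only [hF, hEinv h hh]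
  have hFm : ∀ z ∈ LinearMap.ker M, F z ∈ VV n := by
    intro z hz
    refine ⟨fun i j => ?_, fun i => ?_, fun i => ?_⟩
    · simp only [hF, E, hs i j, ne_comm]
    · simp [hF, E]
    · obtain ⟨s, h, hh, rfl⟩ := hrep i
      rw [← Equiv.sum_comp h (fun j => F z (h (rep s), j))]
      simp only [hFinv h hh]
      simp only [hF]
      rw [Finset.sum_comm]
      have := congrFun (LinearMap.mem_ker.1 hz) s
      simp only [← Finset.mul_sum]
      exact this
  have hFf : ∀ z (hz : z ∈ LinearMap.ker M), ∃ c : ℂ, (⟨F z, hFm z hz⟩ : VV n) = c • v := by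
    intro z hz
    apply hv
    intro k hk
    apply Subtype.ext
    ext ⟨i, j⟩
    rw [rhoV_apply]
    exact hFinv _ (H.inv_mem hk) z i j
  have hle : Module.finrank ℂ (LinearMap.ker M) ≤ 1 := by
    have hz : ∀ z (_ : z ∈ LinearMap.ker M), ∃ c : ℂ, ∀ t, z t = c * v.1 (P t, Q t) := by
      intro z hz
      obtain ⟨c, hc⟩ := hFf z hz
      refine ⟨c, fun t => ?_⟩
      have := congrArg (fun f : VV n => f.1 (P t, Q t)) hc
      simpa [hFP] using this
    by_cases h0 : ∃ z0 ∈ LinearMap.ker M, z0 ≠ 0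
    · obtain ⟨z0, hz0, hz0'⟩ := h0
      refine finrank_le_one (⟨z0, hz0⟩ : LinearMap.ker M) ?_
      rintro ⟨z, hz1⟩
      obtain ⟨c, hc⟩ := hz z hz1
      obtain ⟨c0, hc0⟩ := hz z0 hz0
      have hc00 : c0 ≠ 0 := by
        rintro rfl
        exact hz0' (funext fun t => by simp [hc0])
      refine ⟨c / c0, Subtype.ext (funext fun t => ?_)⟩
      simp only [SetLike.mk_smul_mk, Pi.smul_apply, smul_eq_mul, hc t, hc0 t]
      field_simp
    · push Not at h0
      refine finrank_le_one (0 : LinearMap.ker M) ?_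
      rintro ⟨z, hz1⟩
      exact ⟨0, Subtype.ext (by simp [h0 z hz1])⟩
  omega


theorem triple {n : ℕ} {x : Equiv.Perm (Fin n)}
    (hH : IsMultFree (Subgroup.centralizer ({x} : Set (Equiv.Perm (Fin n)))))
    (g w y z : Equiv.Perm (Fin n)) (hy : ∀ i, y (g i) = g (x i)) (hz : ∀ i, z (w i) = w (x i)) :
    ∃ y' p q : Equiv.Perm (Fin n), (∀ i, y (p i) = p (x i)) ∧ (∀ i, z (p i) = p (y' i)) ∧
      (∀ i, y' (q i) = q (x i)) ∧ (∀ i, z (q i) = q (y i)) := by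
  obtain ⟨a, ha, b, hb, c, hc, h⟩ := mf_comm hH g (g⁻¹ * w)
  rw [mul_inv_cancel_left] at h
  rw [Subgroup.mem_centralizer_singleton_iff] at ha hb hc
  have hy : y = g * x * g⁻¹ := by
    rw [eq_mul_inv_iff_mul_eq]; exact Equiv.ext hy
  have hz : z = w * x * w⁻¹ := by
    rw [eq_mul_inv_iff_mul_eq]; exact Equiv.ext hz
  set k := g⁻¹ * w with hk
  have hw : w = g * k := by rw [hk]; group
  have hza : z = (a * k * b * g) * x * (a * k * b * g)⁻¹ := by
    have e : c * x * c⁻¹ = x := by rw [mul_inv_eq_iff_eq_mul]; exact hc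
    calc z = w * x * w⁻¹ := hz
      _ = (a * k * b * g) * (c * x * c⁻¹) * (a * k * b * g)⁻¹ := by rw [h]; group
      _ = _ := by rw [e]
  refine ⟨a * k * x * (a * k)⁻¹, g * a⁻¹, a * k * b, fun i => ?_, fun i => ?_, fun i => ?_, fun i => ?_⟩
  · have : y * (g * a⁻¹) = g * a⁻¹ * x := by
      have e : x * a⁻¹ = a⁻¹ * x := by
        rw [mul_inv_eq_iff_eq_mul, mul_assoc, eq_inv_mul_iff_mul_eq]; exact ha
      rw [hy, mul_assoc (g * x), inv_mul_cancel_left, mul_assoc, e, mul_assoc]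
    exact congrArg (fun f : Equiv.Perm (Fin n) => f i) this
  · have : z * (g * a⁻¹) = g * a⁻¹ * (a * k * x * (a * k)⁻¹) := by
      rw [hz, hw]; group
    exact congrArg (fun f : Equiv.Perm (Fin n) => f i) this
  · have : a * k * x * (a * k)⁻¹ * (a * k * b) = a * k * b * x := by
      have : a * k * x * (a * k)⁻¹ * (a * k * b) = a * k * (x * b) := by group
      rw [this, ← hb]; group
    exact congrArg (fun f : Equiv.Perm (Fin n) => f i) this
  · have : z * (a * k * b) = a * k * b * y := by
      rw [hza, hy]; group
    exact congrArg (fun f : Equiv.Perm (Fin n) => f i) this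

theorem flip_prop {n : ℕ} {x y : Equiv.Perm (Fin n)} {p0 p1 p2 : Fin n} (h01 : x p0 = p1) (h12 : x p1 = p2)
    (h20 : x p2 = p0) (n01 : p0 ≠ p1) (n02 : p0 ≠ p2) (n12 : p1 ≠ p2)
    (hy : ∀ i, y (Equiv.swap p1 p2 i) = Equiv.swap p1 p2 (x i)) :
    y p0 = p2 ∧ y p2 = p1 ∧ y p1 = p0 ∧ (∀ i, i ≠ p0 → i ≠ p1 → i ≠ p2 → y i = x i) ∧
      (∀ i, x i = y i ∨ y (x i) = i) := by
  have e0 := hy p0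
  have e1 := hy p1
  have e2 := hy p2
  rw [Equiv.swap_apply_of_ne_of_ne n01 n02, h01, Equiv.swap_apply_left] at e0
  rw [Equiv.swap_apply_left, h12, Equiv.swap_apply_right] at e1
  rw [Equiv.swap_apply_right, h20, Equiv.swap_apply_of_ne_of_ne n01 n02] at e2
  have e3 : ∀ i, i ≠ p0 → i ≠ p1 → i ≠ p2 → y i = x i := by
    intro i i0 i1 i2
    have := hy i
    rw [Equiv.swap_apply_of_ne_of_ne i1 i2, Equiv.swap_apply_of_ne_of_ne] at this
    · exact this
    · rw [← h01]; exact fun h => i0 (x.injective h)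
    · rw [← h12]; exact fun h => i1 (x.injective h)
  refine ⟨e0, e1, e2, e3, ?_⟩
  intro i
  by_cases i0 : i = p0
  · right; rw [i0, h01, e2]
  by_cases i1 : i = p1
  · right; rw [i1, h12, e1]
  by_cases i2 : i = p2
  · right; rw [i2, h20, e0]
  left; rw [e3 i i0 i1 i2]

theorem cand {n : ℕ} {x y y' z q : Equiv.Perm (Fin n)} (h : ∀ i, x i = y i ∨ y (x i) = i)
    (h1 : ∀ i, y' (q i) = q (x i)) (h2 : ∀ i, z (q i) = q (y i)) (i : Fin n) : y' i = z i ∨ z (y' i) = i := by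
  obtain ⟨j, rfl⟩ := q.surjective i
  rw [h1, h2, h2, EmbeddingLike.apply_eq_iff_eq, EmbeddingLike.apply_eq_iff_eq]
  exact h j

theorem special {n : ℕ} {x : Equiv.Perm (Fin n)}
    (hH : IsMultFree (Subgroup.centralizer ({x} : Set (Equiv.Perm (Fin n)))))
    {p0 p1 p2 q0 q1 q2 f : Fin n} (h01 : x p0 = p1) (h12 : x p1 = p2)
    (h20 : x p2 = p0) (n01 : p0 ≠ p1) (n02 : p0 ≠ p2) (n12 : p1 ≠ p2)
    (k01 : x q0 = q1) (k12 : x q1 = q2) (k20 : x q2 = q0) (m01 : q0 ≠ q1) (m02 : q0 ≠ q2) (m12 : q1 ≠ q2)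
    (d0 : q0 ≠ p0) (d1 : q0 ≠ p1) (d2 : q0 ≠ p2) (d3 : q1 ≠ p0) (d4 : q1 ≠ p1) (d5 : q1 ≠ p2)
    (d6 : q2 ≠ p0) (d7 : q2 ≠ p1) (d8 : q2 ≠ p2) (hf : x f = f) (hu : ∀ i, x i = i → i = f) : False := by
  have f0 : f ≠ p0 := by grind
  have f1 : f ≠ p1 := by grind
  have f2 : f ≠ p2 := by grind
  have f3 : f ≠ q0 := by grind
  have f4 : f ≠ q1 := by grind
  have f5 : f ≠ q2 := by grind
  let w : Equiv.Perm (Fin n) := Equiv.swap p0 p1 * Equiv.swap p1 q0 * Equiv.swap q0 p2 * Equiv.swap p2 f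
  let g : Equiv.Perm (Fin n) := Equiv.swap p1 p2
  let y := g * x * g⁻¹
  let z := w * x * w⁻¹
  have hy : ∀ i, y (g i) = g (x i) := by intro i; simp [y]
  have hz : ∀ i, z (w i) = w (x i) := by intro i; simp [z]
  obtain ⟨y', p, q, c1, c2, c3, c4⟩ := triple hH g w y z hy hz
  obtain ⟨y0, y2, y1, yr, hxy⟩ := flip_prop h01 h12 h20 n01 n02 n12 hy
  have hc := cand hxy c3 c4
  have w0 : w p0 = p1 := by simp only [w, Equiv.Perm.mul_apply, Equiv.swap_apply_def]; grind
  have w1 : w p1 = q0 := by simp only [w, Equiv.Perm.mul_apply, Equiv.swap_apply_def]; grind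
  have w2 : w q0 = p2 := by simp only [w, Equiv.Perm.mul_apply, Equiv.swap_apply_def]; grind
  have w3 : w p2 = f := by simp only [w, Equiv.Perm.mul_apply, Equiv.swap_apply_def]; grind
  have w4 : w f = p0 := by simp only [w, Equiv.Perm.mul_apply, Equiv.swap_apply_def]; grind
  have w5 : w q1 = q1 := by simp only [w, Equiv.Perm.mul_apply, Equiv.swap_apply_def]; grind
  have w6 : w q2 = q2 := by simp only [w, Equiv.Perm.mul_apply, Equiv.swap_apply_def]; grind
  have z0 := hz p0
  have z1 := hz p1
  have z2 := hz p2
  have z3 := hz q0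
  have z4 := hz q1
  have z5 := hz f
  rw [h01, w0, w1] at z0
  rw [h12, w1, w3] at z1
  rw [h20, w3, w0] at z2
  rw [k01, w2, w5] at z3
  rw [k12, w5, w6] at z4
  rw [hf, w4] at z5
  -- property of (y, z)
  obtain ⟨i, hi⟩ := p.surjective f
  have hyf : y f = f := by rw [yr f f0 f1 f2, hf]
  have hif : i = f := by
    apply hu
    apply p.injective
    rw [← c1, hi, hyf]
  subst hif
  have hp0 : p (x (y' i)) = p0 := by rw [← c1, ← c2, hi, z2, y1]
  have hfix : y' (x (y' i)) = x (y' i) := by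
    apply p.injective
    rw [← c2, hp0, z5]
  have hzfix : z (x (y' i)) = x (y' i) := by
    rcases hc (x (y' i)) with h | h
    · rw [← h, hfix]
    · rwa [hfix] at h
  rcases hc i with h | h
  · rw [h, z2, h12, z3] at hzfix
    exact d5 hzfix
  · have : y' i = q0 := z.injective (by rw [h, z1])
    rw [this, k01, z4] at hzfix
    exact m12 hzfix.symm

theorem grid {n : ℕ} {x : Equiv.Perm (Fin n)}
    (hH : IsMultFree (Subgroup.centralizer ({x} : Set (Equiv.Perm (Fin n)))))
    {p0 p1 p2 q0 q1 q2 r0 r1 r2 : Fin n} (h01 : x p0 = p1) (h12 : x p1 = p2)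
    (h20 : x p2 = p0) (n01 : p0 ≠ p1) (n02 : p0 ≠ p2) (n12 : p1 ≠ p2)
    (k01 : x q0 = q1) (k12 : x q1 = q2) (k20 : x q2 = q0) (m01 : q0 ≠ q1) (m02 : q0 ≠ q2) (m12 : q1 ≠ q2)
    (l01 : x r0 = r1) (l12 : x r1 = r2) (l20 : x r2 = r0) (o01 : r0 ≠ r1) (o02 : r0 ≠ r2) (o12 : r1 ≠ r2)
    (d0 : q0 ≠ p0) (d1 : q0 ≠ p1) (d2 : q0 ≠ p2) (d3 : q1 ≠ p0) (d4 : q1 ≠ p1) (d5 : q1 ≠ p2)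
    (d6 : q2 ≠ p0) (d7 : q2 ≠ p1) (d8 : q2 ≠ p2) 
    (e0 : r0 ≠ p0) (e1 : r0 ≠ p1) (e2 : r0 ≠ p2) (e3 : r1 ≠ p0) (e4 : r1 ≠ p1) (e5 : r1 ≠ p2)
    (e6 : r2 ≠ p0) (e7 : r2 ≠ p1) (e8 : r2 ≠ p2) 
    (f0 : r0 ≠ q0) (f1 : r0 ≠ q1) (f2 : r0 ≠ q2) (f3 : r1 ≠ q0) (f4 : r1 ≠ q1) (f5 : r1 ≠ q2)
    (f6 : r2 ≠ q0) (f7 : r2 ≠ q1) (f8 : r2 ≠ q2) : False := by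
  let w : Equiv.Perm (Fin n) := Equiv.swap r1 q2 * (Equiv.swap p1 q0 * Equiv.swap q0 p2 * Equiv.swap p2 r0)
  let g : Equiv.Perm (Fin n) := Equiv.swap p1 p2
  let y := g * x * g⁻¹
  let z := w * x * w⁻¹
  have hy : ∀ i, y (g i) = g (x i) := by intro i; simp [y]
  have hz : ∀ i, z (w i) = w (x i) := by intro i; simp [z]
  obtain ⟨y', p, q, c1, c2, c3, c4⟩ := triple hH g w y z hy hz
  obtain ⟨y0, y2, y1, yr, hxy⟩ := flip_prop h01 h12 h20 n01 n02 n12 hy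
  have hc := cand hxy c3 c4
  have w0 : w p0 = p0 := by simp only [w, Equiv.Perm.mul_apply, Equiv.swap_apply_def]; grind
  have w1 : w p1 = q0 := by simp only [w, Equiv.Perm.mul_apply, Equiv.swap_apply_def]; grind
  have w2 : w q0 = p2 := by simp only [w, Equiv.Perm.mul_apply, Equiv.swap_apply_def]; grind
  have w3 : w p2 = r0 := by simp only [w, Equiv.Perm.mul_apply, Equiv.swap_apply_def]; grind
  have w4 : w r0 = p1 := by simp only [w, Equiv.Perm.mul_apply, Equiv.swap_apply_def]; grind
  have w5 : w q1 = q1 := by simp only [w, Equiv.Perm.mul_apply, Equiv.swap_apply_def]; grind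
  have w6 : w q2 = r1 := by simp only [w, Equiv.Perm.mul_apply, Equiv.swap_apply_def]; grind
  have w7 : w r1 = q2 := by simp only [w, Equiv.Perm.mul_apply, Equiv.swap_apply_def]; grind
  have w8 : w r2 = r2 := by simp only [w, Equiv.Perm.mul_apply, Equiv.swap_apply_def]; grind
  have wr : ∀ i, i ≠ p1 → i ≠ p2 → i ≠ q0 → i ≠ q2 → i ≠ r0 → i ≠ r1 → w i = i := by
    intro i i1 i2 i3 i4 i5 i6
    simp only [w, Equiv.Perm.mul_apply, Equiv.swap_apply_def]; grind
  have z0 := hz p0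
  have z1 := hz p1
  have z2 := hz p2
  have z3 := hz q0
  have z4 := hz q1
  have z5 := hz q2
  have z6 := hz r0
  have z7 := hz r1
  have z8 := hz r2
  rw [h01, w0, w1] at z0
  rw [h12, w1, w3] at z1
  rw [h20, w3, w0] at z2
  rw [k01, w2, w5] at z3
  rw [k12, w5, w6] at z4
  rw [k20, w6, w2] at z5
  rw [l01, w4, w7] at z6
  rw [l12, w7, w8] at z7
  rw [l20, w8, w4] at z8
  have zr : ∀ i, i ≠ p0 → i ≠ p1 → i ≠ p2 → i ≠ q0 → i ≠ q1 → i ≠ q2 → i ≠ r0 → i ≠ r1 → i ≠ r2 →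
      z i = x i := by
    intro i i0 i1 i2 i3 i4 i5 i6 i7 i8
    have := hz i
    rwa [wr i i1 i2 i3 i5 i6 i7, wr (x i)] at this
    · rw [← h01]; exact fun h => i0 (x.injective h)
    · rw [← h12]; exact fun h => i1 (x.injective h)
    · rw [← k20]; exact fun h => i5 (x.injective h)
    · rw [← k12]; exact fun h => i4 (x.injective h)
    · rw [← l20]; exact fun h => i8 (x.injective h)
    · rw [← l01]; exact fun h => i6 (x.injective h)
  have yz : ∀ i, y (z i) = z (y i) := by
    intro i
    have a0 := yr q0 d0 d1 d2
    have a1 := yr q1 d3 d4 d5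
    have a2 := yr q2 d6 d7 d8
    have b0 := yr r0 e0 e1 e2
    have b1 := yr r1 e3 e4 e5
    have b2 := yr r2 e6 e7 e8
    rw [k01] at a0
    rw [k12] at a1
    rw [k20] at a2
    rw [l01] at b0
    rw [l12] at b1
    rw [l20] at b2
    by_cases i0 : i = p0
    · simp only [i0, z0, z1, z2, z3, z4, z5, z6, z7, z8, y0, y1, y2, a0, a1, a2, b0, b1, b2]
    by_cases i1 : i = p1
    · simp only [i1, z0, z1, z2, z3, z4, z5, z6, z7, z8, y0, y1, y2, a0, a1, a2, b0, b1, b2]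
    by_cases i2 : i = p2
    · simp only [i2, z0, z1, z2, z3, z4, z5, z6, z7, z8, y0, y1, y2, a0, a1, a2, b0, b1, b2]
    by_cases i3 : i = q0
    · simp only [i3, z0, z1, z2, z3, z4, z5, z6, z7, z8, y0, y1, y2, a0, a1, a2, b0, b1, b2]
    by_cases i4 : i = q1
    · simp only [i4, z0, z1, z2, z3, z4, z5, z6, z7, z8, y0, y1, y2, a0, a1, a2, b0, b1, b2]
    by_cases i5 : i = q2
    · simp only [i5, z0, z1, z2, z3, z4, z5, z6, z7, z8, y0, y1, y2, a0, a1, a2, b0, b1, b2]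
    by_cases i6 : i = r0
    · simp only [i6, z0, z1, z2, z3, z4, z5, z6, z7, z8, y0, y1, y2, a0, a1, a2, b0, b1, b2]
    by_cases i7 : i = r1
    · simp only [i7, z0, z1, z2, z3, z4, z5, z6, z7, z8, y0, y1, y2, a0, a1, a2, b0, b1, b2]
    by_cases i8 : i = r2
    · simp only [i8, z0, z1, z2, z3, z4, z5, z6, z7, z8, y0, y1, y2, a0, a1, a2, b0, b1, b2]
    have u0 : x i ≠ p0 := by rw [← h20]; exact fun h => i2 (x.injective h)
    have u1 : x i ≠ p1 := by rw [← h01]; exact fun h => i0 (x.injective h)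
    have u2 : x i ≠ p2 := by rw [← h12]; exact fun h => i1 (x.injective h)
    have u3 : x i ≠ q0 := by rw [← k20]; exact fun h => i5 (x.injective h)
    have u4 : x i ≠ q1 := by rw [← k01]; exact fun h => i3 (x.injective h)
    have u5 : x i ≠ q2 := by rw [← k12]; exact fun h => i4 (x.injective h)
    have u6 : x i ≠ r0 := by rw [← l20]; exact fun h => i8 (x.injective h)
    have u7 : x i ≠ r1 := by rw [← l01]; exact fun h => i6 (x.injective h)
    have u8 : x i ≠ r2 := by rw [← l12]; exact fun h => i7 (x.injective h)
    rw [zr i i0 i1 i2 i3 i4 i5 i6 i7 i8, yr i i0 i1 i2, zr (x i) u0 u1 u2 u3 u4 u5 u6 u7 u8,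
      yr (x i) u0 u1 u2]
  have xy' : ∀ i, x (y' i) = y' (x i) := by
    intro i
    apply p.injective
    rw [← c1, ← c2, ← c2, ← c1, yz]
  have v0 : x (y' p0) = q1 ∨ x (y' p0) = r1 := by
    rcases hc p0 with h | h
    · left; rw [h, z0, k01]
    · right
      have : y' p0 = r0 := z.injective (by rw [h, z2])
      rw [this, l01]
  have v1 : y' p1 = q2 ∨ y' p1 = r2 := by
    rcases hc p1 with h | h
    · left; rw [h, z6]
    · right
      exact z.injective (by rw [h, z8])
  have v2 := xy' p0
  rw [h01] at v2
  rcases v0 with v0 | v0 <;> rcases v1 with v1 | v1 <;> rw [v0, v1] at v2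
  · exact m12 v2
  · exact f7 v2.symm
  · exact f5 v2
  · exact o12 v2


/-- the length of the cycle through `i` -/
noncomputable def per {n : ℕ} (x : Equiv.Perm (Fin n)) (i : Fin n) : ℕ := Function.minimalPeriod x i

theorem per_zpow {n : ℕ} (x : Equiv.Perm (Fin n)) (i : Fin n) (k : ℤ) :
    (x ^ k) i = i ↔ (per x i : ℤ) ∣ k :=
  MulAction.zpow_smul_eq_iff_minimalPeriod_dvd (a := x) (b := i) (n := k)

theorem per_pow {n : ℕ} (x : Equiv.Perm (Fin n)) (i : Fin n) (k : ℕ) :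
    (x ^ k) i = i ↔ per x i ∣ k :=
  MulAction.pow_smul_eq_iff_minimalPeriod_dvd (a := x) (b := i) (n := k)

theorem per_pos {n : ℕ} (x : Equiv.Perm (Fin n)) (i : Fin n) : 0 < per x i := by
  have h : (x ^ orderOf x) i = i := by rw [pow_orderOf_eq_one]; rfl
  rw [per_pow] at h
  exact Nat.pos_of_dvd_of_pos h (orderOf_pos x)

theorem per_comm {n : ℕ} {x h : Equiv.Perm (Fin n)} (hh : h * x = x * h) (i : Fin n) :
    per x (h i) = per x i := by
  have key : ∀ k : ℕ, (x ^ k) (h i) = h i ↔ (x ^ k) i = i := by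
    intro k
    have e : x ^ k * h = h * x ^ k := ((show Commute h x from hh).pow_right k).symm
    have : (x ^ k) (h i) = h ((x ^ k) i) := congrArg (fun f : Equiv.Perm (Fin n) => f i) e
    rw [this, EmbeddingLike.apply_eq_iff_eq]
  apply Nat.dvd_antisymm
  · rw [← per_pow, key, per_pow]
  · rw [← per_pow, ← key, per_pow]

theorem per_sc {n : ℕ} {x : Equiv.Perm (Fin n)} {i j : Fin n} (h : x.SameCycle i j) : per x j = per x i := by
  obtain ⟨k, rfl⟩ := h
  exact per_comm (by rw [← zpow_add_one, ← zpow_one_add, add_comm]) i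

theorem per_x {n : ℕ} {x : Equiv.Perm (Fin n)} (i : Fin n) : per x (x i) = per x i := per_comm rfl i

theorem trans_cyc {n : ℕ} {x : Equiv.Perm (Fin n)} {i j : Fin n} (h : per x i = per x j) :
    ∃ σ : Equiv.Perm (Fin n), σ * x = x * σ ∧ σ i = j := by
  classical
  by_cases hs : x.SameCycle i j
  · obtain ⟨k, hk⟩ := hs
    exact ⟨x ^ k, by rw [← zpow_add_one, ← zpow_one_add, add_comm], hk⟩
  have key : ∀ k m : ℤ, (x ^ k) i = (x ^ m) i ↔ (x ^ k) j = (x ^ m) j := by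
    have e : ∀ (k m : ℤ) (u : Fin n), (x ^ k) u = (x ^ m) u ↔ (x ^ (k - m)) u = u := by
      intro k m u
      rw [sub_eq_add_neg, add_comm, zpow_add, zpow_neg, Equiv.Perm.mul_apply, Equiv.Perm.inv_eq_iff_eq]
    intro k m
    rw [e, e, per_zpow, per_zpow, h]
  let f : Fin n → Fin n := fun p =>
    if h1 : x.SameCycle i p then (x ^ h1.choose) j
    else if h2 : x.SameCycle j p then (x ^ h2.choose) i else p
  have f1 : ∀ k : ℤ, f ((x ^ k) i) = (x ^ k) j := by
    intro k
    have h1 : x.SameCycle i ((x ^ k) i) := ⟨k, rfl⟩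
    simp only [f, h1, dif_pos]
    exact (key _ _).1 h1.choose_spec
  have f2 : ∀ k : ℤ, f ((x ^ k) j) = (x ^ k) i := by
    intro k
    have h2 : x.SameCycle j ((x ^ k) j) := ⟨k, rfl⟩
    have h1 : ¬ x.SameCycle i ((x ^ k) j) := fun h1 => hs (h1.trans h2.symm)
    simp only [f, h1, h2, dif_pos, dif_neg, not_false_eq_true]
    exact (key _ _).2 h2.choose_spec
  have f3 : ∀ p, ¬ x.SameCycle i p → ¬ x.SameCycle j p → f p = p := by
    intro p h1 h2
    simp only [f, h1, h2, dif_neg, not_false_eq_true]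
  have hinv : Function.Involutive f := by
    intro p
    by_cases h1 : x.SameCycle i p
    · obtain ⟨k, rfl⟩ := h1; rw [f1, f2]
    by_cases h2 : x.SameCycle j p
    · obtain ⟨k, rfl⟩ := h2; rw [f2, f1]
    rw [f3 p h1 h2, f3 p h1 h2]
  have hx1 : ∀ (k : ℤ) u, x ((x ^ k) u) = (x ^ (1 + k)) u := by
    intro k u; rw [zpow_add, zpow_one]; rfl
  refine ⟨hinv.toPerm f, ?_, f1 0⟩
  ext1 p
  change f (x p) = x (f p)
  by_cases h1 : x.SameCycle i p
  · obtain ⟨k, rfl⟩ := h1; rw [hx1, f1, f1, hx1]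
  by_cases h2 : x.SameCycle j p
  · obtain ⟨k, rfl⟩ := h2; rw [hx1, f2, f2, hx1]
  rw [f3 p h1 h2, f3 (x p)]
  · rwa [Equiv.Perm.sameCycle_apply_right]
  · rwa [Equiv.Perm.sameCycle_apply_right]

theorem two_col {n : ℕ} {x : Equiv.Perm (Fin n)}
    (hH : IsMultFree (Subgroup.centralizer ({x} : Set (Equiv.Perm (Fin n)))))
    {i j k : Fin n} (hij : per x i ≠ per x j) (hik : per x i ≠ per x k) (hjk : per x j ≠ per x k) : False := by
  obtain ⟨a, ha, b, hb, c, hc, h⟩ := mf_comm hH (Equiv.swap i j) (Equiv.swap j k)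
  rw [Subgroup.mem_centralizer_singleton_iff] at ha hb hc
  have nij : i ≠ j := fun h => hij (by rw [h])
  have nik : i ≠ k := fun h => hik (by rw [h])
  have njk : j ≠ k := fun h => hjk (by rw [h])
  have h1 := congrArg (fun f : Equiv.Perm (Fin n) => f k) h
  simp only [Equiv.Perm.mul_apply, Equiv.swap_apply_right] at h1
  have e1 : Equiv.swap i j (c k) = c k := by
    apply Equiv.swap_apply_of_ne_of_ne
    · intro h; exact hik (by rw [← h, per_comm hc])
    · intro h; exact hjk (by rw [← h, per_comm hc])
  rw [e1] at h1
  have h2 : per x (b (c k)) = per x k := by rw [per_comm hb, per_comm hc]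
  have h3 : per x i = per x (Equiv.swap j k (b (c k))) := by
    conv_lhs => rw [h1]
    rw [per_comm ha]
  by_cases h4 : b (c k) = k
  · rw [h4, Equiv.swap_apply_right] at h3; exact hij h3
  · rw [Equiv.swap_apply_of_ne_of_ne _ h4, h2] at h3
    · exact hik h3
    · intro h5; rw [h5] at h2; exact hjk h2

/-- the colour of a pair -/
noncomputable def pcol {n : ℕ} (x : Equiv.Perm (Fin n)) (i j : Fin n) : ℕ × Prop × Prop × Prop :=
  (per x i + per x j, x i = j ∨ x j = i, x (x i) = j ∨ x (x j) = i, x.SameCycle i j)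

theorem pcol_symm {n : ℕ} (x : Equiv.Perm (Fin n)) (i j : Fin n) : pcol x i j = pcol x j i := by
  simp only [pcol, Prod.mk.injEq]
  exact ⟨add_comm _ _, propext or_comm, propext or_comm, propext Equiv.Perm.sameCycle_comm⟩

theorem pcol_inv {n : ℕ} {x h : Equiv.Perm (Fin n)} (hh : h * x = x * h) (i j : Fin n) :
    pcol x (h i) (h j) = pcol x i j := by
  have e : ∀ u, x (h u) = h (x u) := fun u => (congrArg (fun f : Equiv.Perm (Fin n) => f u) hh).symm
  have e2 : x.SameCycle (h i) (h j) ↔ x.SameCycle i j := by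
    have : h * x * h⁻¹ = x := by rw [hh, mul_inv_cancel_right]
    have h2 := Equiv.Perm.sameCycle_conj (f := x) (g := h) (x := h i) (y := h j)
    rw [this] at h2
    simpa using h2
  simp only [pcol, Prod.mk.injEq, per_comm hh, e, EmbeddingLike.apply_eq_iff_eq, e2]

theorem pair3 {n : ℕ} (hn : 4 ≤ n) {x : Equiv.Perm (Fin n)}
    (hH : IsMultFree (Subgroup.centralizer ({x} : Set (Equiv.Perm (Fin n)))))
    (B : Fin n) (hB : ∀ i, per x i = per x B) (p1 q1 p2 q2 p3 q3 : Fin n) (h1 : p1 ≠ q1) (h2 : p2 ≠ q2)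
    (h3 : p3 ≠ q3) (d12 : pcol x p1 q1 ≠ pcol x p2 q2) (d13 : pcol x p1 q1 ≠ pcol x p3 q3)
    (d23 : pcol x p2 q2 ≠ pcol x p3 q3) : False := by
  refine pair_lemma hn hH (pcol x) (pcol_symm x) ?_ 1 ![B] ?_ ![p1, p2, p3] ![q1, q2, q3] ?_ ?_
  · intro h hh i j
    rw [Subgroup.mem_centralizer_singleton_iff] at hh
    exact pcol_inv hh i j
  · intro i
    obtain ⟨σ, h1, h2⟩ := trans_cyc (hB i).symm
    exact ⟨0, σ, by rwa [Subgroup.mem_centralizer_singleton_iff], h2⟩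
  · intro t; fin_cases t
    · exact h1
    · exact h2
    · exact h3
  · intro s t hst
    fin_cases s <;> fin_cases t <;> first | rfl | exact absurd hst ‹_› | exact absurd hst.symm ‹_›

theorem pair4 {n : ℕ} (hn : 4 ≤ n) {x : Equiv.Perm (Fin n)}
    (hH : IsMultFree (Subgroup.centralizer ({x} : Set (Equiv.Perm (Fin n)))))
    (A B : Fin n) (hB : ∀ i, per x i = per x A ∨ per x i = per x B) (p1 q1 p2 q2 p3 q3 p4 q4 : Fin n)
    (h1 : p1 ≠ q1) (h2 : p2 ≠ q2)
    (h3 : p3 ≠ q3) (h4 : p4 ≠ q4) (d12 : pcol x p1 q1 ≠ pcol x p2 q2) (d13 : pcol x p1 q1 ≠ pcol x p3 q3)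
    (d14 : pcol x p1 q1 ≠ pcol x p4 q4) 
    (d23 : pcol x p2 q2 ≠ pcol x p3 q3) (d24 : pcol x p2 q2 ≠ pcol x p4 q4)
    (d34 : pcol x p3 q3 ≠ pcol x p4 q4)  : False := by
  refine pair_lemma hn hH (pcol x) (pcol_symm x) ?_ 2 ![A, B] ?_ ![p1, p2, p3, p4] ![q1, q2, q3, q4] ?_ ?_
  · intro h hh i j
    rw [Subgroup.mem_centralizer_singleton_iff] at hh
    exact pcol_inv hh i j
  · intro i
    rcases hB i with hi | hi
    · obtain ⟨σ, h1, h2⟩ := trans_cyc hi.symm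
      exact ⟨0, σ, by rwa [Subgroup.mem_centralizer_singleton_iff], h2⟩
    · obtain ⟨σ, h1, h2⟩ := trans_cyc hi.symm
      exact ⟨1, σ, by rwa [Subgroup.mem_centralizer_singleton_iff], h2⟩
  · intro t; fin_cases t
    · exact h1
    · exact h2
    · exact h3
    · exact h4
  · intro s t hst
    fin_cases s <;> fin_cases t <;> first | rfl | exact absurd hst ‹_› | exact absurd hst.symm ‹_›


theorem sc1 {n : ℕ} (x : Equiv.Perm (Fin n)) (p : Fin n) : x.SameCycle p (x p) := ⟨1, rfl⟩
theorem sc2 {n : ℕ} (x : Equiv.Perm (Fin n)) (p : Fin n) : x.SameCycle p (x (x p)) := ⟨2, rfl⟩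
theorem sc3 {n : ℕ} (x : Equiv.Perm (Fin n)) (p : Fin n) : x.SameCycle p (x (x (x p))) := ⟨3, rfl⟩

theorem nsc {n : ℕ} {x : Equiv.Perm (Fin n)} {p q p' q' : Fin n} (h : ¬ x.SameCycle p q)
    (h1 : x.SameCycle p p') (h2 : x.SameCycle q q') : q' ≠ p' := by
  rintro rfl
  exact h (h1.trans h2.symm)

theorem nopow {n : ℕ} {x : Equiv.Perm (Fin n)} {p : Fin n} (k : ℕ) (h0 : 0 < k) (hk : k < per x p) :
    (x ^ k) p ≠ p := by
  rw [Ne, per_pow]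
  exact Nat.not_dvd_of_pos_of_lt h0 hk

theorem dper {n : ℕ} {x : Equiv.Perm (Fin n)} {i j k l : Fin n} (h : per x i + per x j ≠ per x k + per x l) :
    pcol x i j ≠ pcol x k l := fun e => h (congrArg Prod.fst e)

theorem dsc {n : ℕ} {x : Equiv.Perm (Fin n)} {i j k l : Fin n} (h : x.SameCycle i j) (h' : ¬ x.SameCycle k l) :
    pcol x i j ≠ pcol x k l := fun e => h' ((congrArg (fun t : ℕ × Prop × Prop × Prop => t.2.2.2) e).mp h)

theorem dR1 {n : ℕ} {x : Equiv.Perm (Fin n)} {i j k l : Fin n} (h : x i = j) (h1 : x k ≠ l) (h2 : x l ≠ k) :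
    pcol x i j ≠ pcol x k l := fun e => ((congrArg (fun t : ℕ × Prop × Prop × Prop => t.2.1) e).mp (Or.inl h)).elim h1 h2

theorem dR2 {n : ℕ} {x : Equiv.Perm (Fin n)} {i j k l : Fin n} (h : x (x i) = j) (h1 : x (x k) ≠ l)
    (h2 : x (x l) ≠ k) :
    pcol x i j ≠ pcol x k l := fun e => ((congrArg (fun t : ℕ × Prop × Prop × Prop => t.2.2.1) e).mp (Or.inl h)).elim h1 h2

/-- the cycle as a finset -/
noncomputable def cyc {n : ℕ} (x : Equiv.Perm (Fin n)) (p : Fin n) : Finset (Fin n) :=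
  (Finset.range (per x p)).image (fun k => (x ^ k) p)

theorem cyc_card {n : ℕ} (x : Equiv.Perm (Fin n)) (p : Fin n) : (cyc x p).card ≤ per x p :=
  Finset.card_image_le.trans (by rw [Finset.card_range])

theorem mem_cyc {n : ℕ} {x : Equiv.Perm (Fin n)} {p q : Fin n} (h : x.SameCycle p q) : q ∈ cyc x p := by
  obtain ⟨k, rfl⟩ := h
  have hp : (0 : ℤ) < per x p := by exact_mod_cast per_pos x p
  have h1 := Int.emod_nonneg k hp.ne'
  have h2 := Int.emod_lt_of_pos k hp
  obtain ⟨m, hm⟩ := Int.eq_ofNat_of_zero_le h1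
  refine Finset.mem_image.2 ⟨m, Finset.mem_range.2 (by omega), ?_⟩
  have h3 : k = m + per x p * (k / per x p) := by
    have := Int.emod_add_mul_ediv k (per x p)
    omega
  rw [h3, zpow_add, Equiv.Perm.mul_apply, (per_zpow x p _).2 (dvd_mul_right _ _), zpow_natCast]

theorem exists_out {n : ℕ} (S : Finset (Fin n)) (h : S.card < n) : ∃ i, i ∉ S := by
  by_contra hc
  push Not at hc
  have : S = Finset.univ := Finset.eq_univ_iff_forall.2 hc
  rw [this, Finset.card_univ, Fintype.card_fin] at h
  omega

theorem grid' {n : ℕ} {x : Equiv.Perm (Fin n)}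
    (hH : IsMultFree (Subgroup.centralizer ({x} : Set (Equiv.Perm (Fin n)))))
    {p q r : Fin n} (hp : per x p = 3) (hq : per x q = 3) (hr : per x r = 3)
    (hpq : ¬ x.SameCycle p q) (hpr : ¬ x.SameCycle p r) (hqr : ¬ x.SameCycle q r) : False := by
  have c3 : ∀ p, per x p = 3 → x (x (x p)) = p ∧ p ≠ x p ∧ p ≠ x (x p) ∧ x p ≠ x (x p) := by
    intro p hp
    refine ⟨(per_pow x p 3).2 (by rw [hp]), (nopow 1 (by omega) (by omega)).symm,
      (nopow 2 (by omega) (by omega)).symm, fun h => nopow (p := p) 1 (by omega) (by omega) (x.injective h).symm⟩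
  obtain ⟨a1, a2, a3, a4⟩ := c3 p hp
  obtain ⟨b1, b2, b3, b4⟩ := c3 q hq
  obtain ⟨e1, e2, e3, e4⟩ := c3 r hr
  have s0 : ∀ p, x.SameCycle p p := fun p => Equiv.Perm.SameCycle.refl x p
  exact grid hH (p0 := p) (q0 := q) (r0 := r) rfl rfl a1 a2 a3 a4 rfl rfl b1 b2 b3 b4 rfl rfl e1 e2 e3 e4
    (nsc hpq (s0 _) (s0 _)) (nsc hpq (sc1 _ _) (s0 _)) (nsc hpq (sc2 _ _) (s0 _))
    (nsc hpq (s0 _) (sc1 _ _)) (nsc hpq (sc1 _ _) (sc1 _ _)) (nsc hpq (sc2 _ _) (sc1 _ _))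
    (nsc hpq (s0 _) (sc2 _ _)) (nsc hpq (sc1 _ _) (sc2 _ _)) (nsc hpq (sc2 _ _) (sc2 _ _))
    (nsc hpr (s0 _) (s0 _)) (nsc hpr (sc1 _ _) (s0 _)) (nsc hpr (sc2 _ _) (s0 _))
    (nsc hpr (s0 _) (sc1 _ _)) (nsc hpr (sc1 _ _) (sc1 _ _)) (nsc hpr (sc2 _ _) (sc1 _ _))
    (nsc hpr (s0 _) (sc2 _ _)) (nsc hpr (sc1 _ _) (sc2 _ _)) (nsc hpr (sc2 _ _) (sc2 _ _))
    (nsc hqr (s0 _) (s0 _)) (nsc hqr (sc1 _ _) (s0 _)) (nsc hqr (sc2 _ _) (s0 _))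
    (nsc hqr (s0 _) (sc1 _ _)) (nsc hqr (sc1 _ _) (sc1 _ _)) (nsc hqr (sc2 _ _) (sc1 _ _))
    (nsc hqr (s0 _) (sc2 _ _)) (nsc hqr (sc1 _ _) (sc2 _ _)) (nsc hqr (sc2 _ _) (sc2 _ _))

theorem special' {n : ℕ} {x : Equiv.Perm (Fin n)}
    (hH : IsMultFree (Subgroup.centralizer ({x} : Set (Equiv.Perm (Fin n)))))
    {p q f : Fin n} (hp : per x p = 3) (hq : per x q = 3)
    (hpq : ¬ x.SameCycle p q) (hf : x f = f) (hu : ∀ i, x i = i → i = f) : False := by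
  have c3 : ∀ p, per x p = 3 → x (x (x p)) = p ∧ p ≠ x p ∧ p ≠ x (x p) ∧ x p ≠ x (x p) := by
    intro p hp
    refine ⟨(per_pow x p 3).2 (by rw [hp]), (nopow 1 (by omega) (by omega)).symm,
      (nopow 2 (by omega) (by omega)).symm, fun h => nopow (p := p) 1 (by omega) (by omega) (x.injective h).symm⟩
  obtain ⟨a1, a2, a3, a4⟩ := c3 p hp
  obtain ⟨b1, b2, b3, b4⟩ := c3 q hq
  have s0 : ∀ p, x.SameCycle p p := fun p => Equiv.Perm.SameCycle.refl x p
  exact special hH (p0 := p) (q0 := q) rfl rfl a1 a2 a3 a4 rfl rfl b1 b2 b3 b4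
    (nsc hpq (s0 _) (s0 _)) (nsc hpq (sc1 _ _) (s0 _)) (nsc hpq (sc2 _ _) (s0 _))
    (nsc hpq (s0 _) (sc1 _ _)) (nsc hpq (sc1 _ _) (sc1 _ _)) (nsc hpq (sc2 _ _) (sc1 _ _))
    (nsc hpq (s0 _) (sc2 _ _)) (nsc hpq (sc1 _ _) (sc2 _ _)) (nsc hpq (sc2 _ _) (sc2 _ _)) hf hu

theorem ct_inv {n : ℕ} {x : Equiv.Perm (Fin n)} (hx : x ≠ 1) (h : ∀ i, x (x i) = i) :
    ∃ m, x.cycleType = Multiset.replicate m 2 ∧ x.support.card = 2 * m := by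
  have ho : orderOf x = 2 := orderOf_eq_prime (Equiv.ext h) hx
  obtain ⟨m, hm⟩ := Equiv.Perm.cycleType_prime_order (σ := x) (by rw [ho]; exact Nat.prime_two)
  rw [ho] at hm
  refine ⟨m + 1, hm, ?_⟩
  rw [← Equiv.Perm.sum_cycleType, hm, Multiset.sum_replicate, smul_eq_mul, mul_comm]

theorem ct_one {n : ℕ} {x : Equiv.Perm (Fin n)} {B : Fin n} (hp : (per x B).Prime) (hB : x B ≠ B)
    (h : ∀ i, ¬ x.SameCycle B i → x i = i) : x.cycleType = {per x B} := by
  have hc : x.IsCycle := ⟨B, hB, fun i hi => by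
    by_contra hc
    exact hi (h i hc)⟩
  have ho : orderOf x = per x B := by
    haveI : Fact (per x B).Prime := ⟨hp⟩
    refine orderOf_eq_prime (Equiv.ext fun i => ?_) hc.ne_one
    change (x ^ per x B) i = i
    rw [per_pow]
    by_cases hi : x.SameCycle B i
    · rw [per_sc hi]
    · have h1 : (x ^ 1) i = i := h i hi
      rw [per_pow] at h1
      exact h1.trans (one_dvd _)
  rw [hc.cycleType, ← hc.orderOf, ho]


theorem fwd {n : ℕ} (hn : 7 ≤ n) (x : Equiv.Perm (Fin n)) (hx : x ≠ 1)
    (hH : IsMultFree (Subgroup.centralizer ({x} : Set (Equiv.Perm (Fin n))))) :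
      x.cycleType = {2} ∨ x.cycleType = {3} ∨
        (∃ m, x.cycleType = Multiset.replicate m 2 ∧ (n = 2 * m ∨ n = 2 * m + 1)) := by
  classical
  have hn4 : 4 ≤ n := by omega
  haveI : Nonempty (Fin n) := ⟨⟨0, by omega⟩⟩
  obtain ⟨B, hmax⟩ := Finite.exists_max (per x)
  have fix1 : ∀ i, per x i = 1 → x i = i := fun i hi => (per_pow x i 1).2 (by rw [hi])
  have fix1' : ∀ i, x i = i → per x i = 1 := fun i hi =>
    Nat.dvd_one.1 ((per_pow x i 1).1 hi)
  have hB2 : 2 ≤ per x B := by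
    by_contra hc
    apply hx
    ext1 i
    have h1 := hmax i
    have h2 := per_pos x i
    exact fix1 i (by omega)
  have two : ∀ i, per x i = 2 → x (x i) = i := fun i hi => (per_pow x i 2).2 (by rw [hi])
  have nB1 : x B ≠ B := nopow 1 (by omega) (by omega)
  -- facts for long cycles
  have long : 4 ≤ per x B → B ≠ x (x B) ∧ pcol x B (x B) ≠ pcol x B (x (x B)) := by
    intro h
    refine ⟨(nopow 2 (by omega) (by omega)).symm, dR1 rfl ?_ ?_⟩
    · exact fun h => nB1 (x.injective h).symm
    · exact nopow 3 (by omega) (by omega)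
  have long6 : 6 ≤ per x B → B ≠ x (x (x B)) ∧ pcol x B (x B) ≠ pcol x B (x (x (x B))) ∧
      pcol x B (x (x B)) ≠ pcol x B (x (x (x B))) := by
    intro h
    refine ⟨(nopow 3 (by omega) (by omega)).symm, dR1 rfl ?_ ?_, dR2 rfl ?_ ?_⟩
    · exact fun h => nopow (p := B) 2 (by omega) (by omega) (x.injective h).symm
    · exact nopow 4 (by omega) (by omega)
    · exact fun h => nB1 (x.injective (x.injective h)).symm
    · exact nopow 5 (by omega) (by omega)
  by_cases hall : ∀ i, per x i = per x B
  · by_cases hb2 : per x B = 2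
    · right; right
      obtain ⟨m, h1, h2⟩ := ct_inv hx (fun i => two i (by rw [hall i, hb2]))
      refine ⟨m, h1, Or.inl ?_⟩
      have : x.support = Finset.univ := by
        rw [Finset.eq_univ_iff_forall]
        intro i
        rw [Equiv.Perm.mem_support]
        intro h
        have := fix1' i h
        have := hall i
        omega
      rw [this, Finset.card_univ, Fintype.card_fin] at h2
      exact h2
    exfalso
    by_cases hb3 : per x B = 3
    · have c1 := cyc_card x B
      obtain ⟨C, hC⟩ := exists_out (cyc x B) (by omega)
      have c2 := cyc_card x C
      have pC := hall C
      obtain ⟨D, hD⟩ := exists_out (cyc x B ∪ cyc x C) (by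
        have := Finset.card_union_le (cyc x B) (cyc x C)
        omega)
      rw [Finset.mem_union, not_or] at hD
      exact grid' hH hb3 (by rw [hall C, hb3]) (by rw [hall D, hb3]) (fun h => hC (mem_cyc h))
        (fun h => hD.1 (mem_cyc h)) (fun h => hD.2 (mem_cyc h))
    have hb4 : 4 ≤ per x B := by omega
    obtain ⟨l1, l2⟩ := long hb4
    by_cases hC : ∃ C, ¬ x.SameCycle B C
    · obtain ⟨C, hC⟩ := hC
      exact pair3 hn4 hH B hall B (x B) B (x (x B)) B C nB1.symm l1
        (fun h => hC (h ▸ Equiv.Perm.SameCycle.refl x B)) l2 (dsc (sc1 _ _) hC) (dsc (sc2 _ _) hC)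
    · push Not at hC
      have hb7 : 7 ≤ per x B := by
        by_contra hlt
        obtain ⟨C, hC'⟩ := exists_out (cyc x B) (by have := cyc_card x B; omega)
        exact hC' (mem_cyc (hC C))
      obtain ⟨m1, m2, m3⟩ := long6 (by omega)
      exact pair3 hn4 hH B hall B (x B) B (x (x B)) B (x (x (x B))) nB1.symm l1 m1 l2 m2 m3
  push Not at hall
  obtain ⟨A, hA⟩ := hall
  have hAB : per x A < per x B := lt_of_le_of_ne (hmax A) hA
  have hA0 := per_pos x A
  have htwo : ∀ i, per x i = per x A ∨ per x i = per x B := by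
    intro i
    by_contra hc
    push Not at hc
    exact two_col hH hc.1 hc.2 hA
  have nAB : A ≠ B := fun h => hA (by rw [h])
  have pB1 : per x (x B) = per x B := per_x B
  have pB2 : per x (x (x B)) = per x B := by rw [per_x, per_x]
  have pB3 : per x (x (x (x B))) = per x B := by rw [per_x, per_x, per_x]
  have pA1 : per x (x A) = per x A := per_x A
  have dAB1 : pcol x A B ≠ pcol x B (x B) := dper (by omega)
  have dAB2 : pcol x A B ≠ pcol x B (x (x B)) := dper (by omega)
  by_cases hA' : ∃ A', A' ≠ A ∧ per x A' = per x A
  · obtain ⟨A', hA'1, hA'2⟩ := hA'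
    by_cases hb4 : 4 ≤ per x B
    · exfalso
      obtain ⟨l1, l2⟩ := long hb4
      exact pair4 hn4 hH A B htwo A B B (x B) B (x (x B)) A A' nAB nB1.symm l1 hA'1.symm
        dAB1 dAB2 (dper (by omega)) l2 (dper (by omega)) (dper (by omega))
    by_cases hC : ∃ C, ¬ x.SameCycle B C ∧ per x C = per x B
    · exfalso
      obtain ⟨C, hC1, hC2⟩ := hC
      exact pair4 hn4 hH A B htwo A B B (x B) B C A A' nAB nB1.symm
        (fun h => hC1 (h ▸ Equiv.Perm.SameCycle.refl x B)) hA'1.symm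
        dAB1 (dper (by omega)) (dper (by omega)) (dsc (sc1 _ _) hC1) (dper (by omega)) (dper (by omega))
    push Not at hC
    by_cases ha : per x A = 1
    · have hct := ct_one (x := x) (B := B) (by
        have : per x B = 2 ∨ per x B = 3 := by omega
        rcases this with h | h <;> rw [h] <;> norm_num) nB1 (by
        intro i hi
        apply fix1
        rcases htwo i with h | h
        · omega
        · exact absurd h (hC i hi))
      have : per x B = 2 ∨ per x B = 3 := by omega
      rcases this with h | h <;> rw [h] at hct
      · exact Or.inl hct
      · exact Or.inr (Or.inl hct)
    exfalso
    have nA1 : x A ≠ A := nopow 1 (by omega) (by omega)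
    obtain ⟨D, hD⟩ := exists_out (cyc x B ∪ cyc x A) (by
        have := Finset.card_union_le (cyc x B) (cyc x A)
        have := cyc_card x B
        have := cyc_card x A
        omega)
    rw [Finset.mem_union, not_or] at hD
    have hD1 : ¬ x.SameCycle B D := fun h => hD.1 (mem_cyc h)
    have hD2 : ¬ x.SameCycle A D := fun h => hD.2 (mem_cyc h)
    have hDp : per x D = per x A := (htwo D).resolve_right (hC D hD1)
    exact pair4 hn4 hH A B htwo A B B (x B) A (x A) A D nAB nB1.symm nA1.symm
        (fun h => hD2 (h ▸ Equiv.Perm.SameCycle.refl x A))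
        dAB1 (dper (by omega)) (dper (by omega)) (dper (by omega)) (dper (by omega)) (dsc (sc1 _ _) hD2)
  push Not at hA'
  have hxA : x A = A := by
    by_contra hc
    exact hA' (x A) hc pA1
  have ha1 := fix1' A hxA
  have hB' : ∀ i, i ≠ A → per x i = per x B := fun i hi => (htwo i).resolve_left (hA' i hi)
  by_cases hb2 : per x B = 2
  · right; right
    obtain ⟨m, h1, h2⟩ := ct_inv hx (fun i => by
      by_cases hi : i = A
      · rw [hi, hxA, hxA]
      · exact two i (by rw [hB' i hi, hb2]))
    refine ⟨m, h1, Or.inr ?_⟩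
    have : x.support = Finset.univ.erase A := by
      ext i
      rw [Equiv.Perm.mem_support, Finset.mem_erase]
      constructor
      · intro h; exact ⟨fun h' => h (by rw [h', hxA]), Finset.mem_univ _⟩
      · rintro ⟨h, -⟩ h'
        have := fix1' i h'
        have := hB' i h
        omega
    rw [this, Finset.card_erase_of_mem (Finset.mem_univ _), Finset.card_univ, Fintype.card_fin] at h2
    omega
  exfalso
  have hcov : ∀ C, C ∉ insert A (cyc x B) → ¬ x.SameCycle B C ∧ per x C = per x B := by
    intro C hC
    rw [Finset.mem_insert, not_or] at hC
    exact ⟨fun h => hC.2 (mem_cyc h), hB' C hC.1⟩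
  have hcc := Finset.card_insert_le A (cyc x B)
  have hcc2 := cyc_card x B
  by_cases hb3 : per x B = 3
  · obtain ⟨C, hC⟩ := exists_out (insert A (cyc x B)) (by omega)
    obtain ⟨hC1, hC2⟩ := hcov C hC
    refine special' hH hb3 (by rw [hC2, hb3]) hC1 hxA ?_
    intro i hi
    by_contra hc
    have := hB' i hc
    have := fix1' i hi
    omega
  have hb4 : 4 ≤ per x B := by omega
  obtain ⟨l1, l2⟩ := long hb4
  by_cases hC : ∃ C, ¬ x.SameCycle B C ∧ per x C = per x B
  · obtain ⟨C, hC1, hC2⟩ := hC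
    exact pair4 hn4 hH A B htwo A B B (x B) B (x (x B)) B C nAB nB1.symm l1
      (fun h => hC1 (h ▸ Equiv.Perm.SameCycle.refl x B))
      dAB1 dAB2 (dper (by omega)) l2 (dsc (sc1 _ _) hC1) (dsc (sc2 _ _) hC1)
  have hb6 : 6 ≤ per x B := by
    by_contra hlt
    obtain ⟨C, hC'⟩ := exists_out (insert A (cyc x B)) (by omega)
    exact hC ⟨C, hcov C hC'⟩
  obtain ⟨m1, m2, m3⟩ := long6 hb6
  exact pair4 hn4 hH A B htwo A B B (x B) B (x (x B)) B (x (x (x B))) nAB nB1.symm l1 m1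
      dAB1 dAB2 (dper (by omega)) l2 m2 m3

theorem stmt1 (n : ℕ) (hn : 7 ≤ n) (x : Equiv.Perm (Fin n)) (hx : x ≠ 1) :
    IsMultFree (Subgroup.centralizer ({x} : Set (Equiv.Perm (Fin n)))) ↔
      x.cycleType = {2} ∨ x.cycleType = {3} ∨
        (∃ m, x.cycleType = Multiset.replicate m 2 ∧ (n = 2 * m ∨ n = 2 * m + 1)) := by

  constructor
  · exact fwd hn x hx
  · rintro (h | h | ⟨m, h, h'⟩)
    · exact mf_two x h
    · exact mf_three x h
    · exact mf_inv x m h h'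
end

section
/- Let k ≥ 10, regard S_{2k} as the subgroup of S_{2k+1} fixing the point 2k+1, and let W = S_k≀S_2 ≤ S_{2k} be the subgroup of permutations g of {1,…,2k} with g({1,…,k}) equal to {1,…,k} or to {k+1,…,2k}. Let ψ: W → {±1} be the homomorphism with ψ(g) = 1 if g({1,…,k}) = {1,…,k} and ψ(g) = −1 otherwise, and set Γ_k = {g ∈ W : sgn(g) = ψ(g)}. Then the permutation characters of S_{2k+1} on the cosets of each of the three subgroups W, A_{2k}∩W (the even permutations in W) and Γ_k are all multiplicity-free. -/
/-- The subgroup of permutations preserving the partition of `α` into the fibres of a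
colouring `c` (two points get mapped to the same fibre iff they lie in the same fibre). -/
def colorStab {α : Type*} {β : Sort*} (c : α → β) : Subgroup (Equiv.Perm α) where
  carrier := {g | ∀ i j : α, c i = c j ↔ c (g i) = c (g j)}
  one_mem' := by intro i j; simp
  mul_mem' := by
    intro a b ha hb i j
    simpa [Equiv.Perm.mul_apply] using (hb i j).trans (ha (b i) (b j))
  inv_mem' := by
    intro g hg i j
    simpa using (hg (g⁻¹ i) (g⁻¹ j)).symm

/-- The natural embedding of the symmetric group on `α` into the symmetric group on
`Option α` (one extra point, which is fixed). -/
def optionHom (α : Type*) : Equiv.Perm α →* Equiv.Perm (Option α) where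
  toFun e := e.optionCongr
  map_one' := by
    ext x
    cases x <;> simp
  map_mul' a b := by
    ext x
    cases x <;> simp [Equiv.Perm.mul_apply]

section
open CategoryTheory

theorem simple_stable {G : Type} [Group G] (V : FDRep ℂ G) [Simple V]
    (U : Submodule ℂ V) (hU : ∀ g, ∀ u ∈ U, V.ρ g u ∈ U) (hne : U ≠ ⊥) : U = ⊤ := by
  let σ : Representation ℂ G U :=
    { toFun := fun g => (V.ρ g).restrict (hU g)
      map_one' := by ext; simp
      map_mul' := by intro a b; ext; simp }
  let ι : FDRep.of σ ⟶ V :=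
    { hom := FGModuleCat.ofHom U.subtype
      comm := by
        intro g
        ext u
        rfl }
  have hinj : Function.Injective ι.hom.hom := Subtype.val_injective
  have hι : ι ≠ 0 := by
    intro h
    apply hne
    rw [eq_bot_iff]
    intro u hu
    have : ι.hom.hom ⟨u, hu⟩ = (0 : FDRep.of σ ⟶ V).hom.hom ⟨u, hu⟩ := by rw [h]
    exact this
  have : Mono ι := by
    constructor
    intro Z a b hab
    ext z
    have : (a ≫ ι).hom.hom z = (b ≫ ι).hom.hom z := by rw [hab]
    exact this
  have : IsIso ι := isIso_of_mono_of_nonzero hι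
  rw [eq_top_iff]
  intro v _
  have h2 : (inv ι ≫ ι).hom.hom v = v := by
    rw [IsIso.inv_hom_id]; rfl
  have h3 : (inv ι ≫ ι).hom.hom v = ((inv ι).hom.hom v : U).1 := rfl
  rw [← h2, h3]
  exact Subtype.property _

theorem gelfand_lin {G : Type} [Group G] [Finite G] (H : Subgroup G)
    {V : Type*} [AddCommGroup V] [Module ℂ V] [FiniteDimensional ℂ V]
    (ρ : Representation ℂ G V)
    (hirr : ∀ U : Submodule ℂ V, (∀ g, ∀ u ∈ U, ρ g u ∈ U) → U ≠ ⊥ → U = ⊤)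
    (hsym : ∀ g : G, ∃ h ∈ H, g * h * (g * h) ∈ H) :
    Module.finrank ℂ (Representation.invariants (ρ.comp H.subtype)) ≤ 1 := by
  classical
  have := Fintype.ofFinite G
  set I := Representation.invariants (ρ.comp H.subtype) with hI
  let P : Module.End ℂ V := ∑ h : H, ρ h
  have hPl : ∀ h ∈ H, ρ h * P = P := by
    intro h hh
    simp only [P, Finset.mul_sum, ← map_mul]
    exact Fintype.sum_equiv (Equiv.mulLeft (⟨h, hh⟩ : H)) _ _ (fun x => rfl)
  have hPr : ∀ h ∈ H, P * ρ h = P := by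
    intro h hh
    simp only [P, Finset.sum_mul, ← map_mul]
    exact Fintype.sum_equiv (Equiv.mulRight (⟨h, hh⟩ : H)) _ _ (fun x => rfl)
  have hPinv : ∀ g, P * ρ g * P = P * ρ g⁻¹ * P := by
    intro g
    obtain ⟨h, hh, h2⟩ := hsym g
    have e'' : g⁻¹ = h * (g * (h * (g * h * (g * h))⁻¹)) := by group
    rw [e'', map_mul, map_mul, ← mul_assoc, hPr h hh, mul_assoc, mul_assoc, mul_assoc,
      hPl _ (H.mul_mem hh (H.inv_mem h2))]
  have hPmid : ∀ a b, P * ρ a * P * (ρ b * P) = ∑ h : H, P * ρ (a * h * b) * P := by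
    intro a b
    have : P * ρ a * P * (ρ b * P) = P * ρ a * (∑ h : H, ρ h) * (ρ b * P) := rfl
    rw [this, Finset.mul_sum, Finset.sum_mul]
    refine Finset.sum_congr rfl fun h _ => ?_
    simp only [map_mul, mul_assoc]
  have hcomm : ∀ a b, P * ρ a * P * (ρ b * P) = P * ρ b * P * (ρ a * P) := by
    intro a b
    have h1 : P * ρ b * P * (ρ a * P) = P * ρ b⁻¹ * P * (ρ a⁻¹ * P) := by
      have hb := hPinv b
      have ha := hPinv a
      have hc : (Fintype.card H : ℂ) ≠ 0 := by exact_mod_cast Fintype.card_ne_zero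
      have hPP : P * P = (Fintype.card H : ℂ) • P := by
        have : P * P = (∑ h : H, ρ h) * P := rfl
        rw [this, Finset.sum_mul, Finset.sum_congr rfl (fun h _ => hPl h.1 h.2)]
        simp [Nat.cast_smul_eq_nsmul]
      have key : ∀ x y, (P * ρ x * P) * (P * ρ y * P)
          = (Fintype.card H : ℂ) • (P * ρ x * P * (ρ y * P)) := by
        intro x y
        calc (P * ρ x * P) * (P * ρ y * P) = P * ρ x * (P * P) * (ρ y * P) := by
              simp only [mul_assoc]
          _ = _ := by rw [hPP]; simp only [mul_smul_comm, smul_mul_assoc]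
      have hk := key b a
      rw [hb, ha, key b⁻¹ a⁻¹] at hk
      rw [← hb] at hk
      rw [← hb]
      exact (smul_right_injective _ hc hk).symm
    rw [h1, hPmid, hPmid]
    refine Fintype.sum_equiv (Equiv.inv H) _ _ (fun x => ?_)
    rw [hPinv]
    simp [mul_assoc]
  have hPI : ∀ v ∈ I, P v = (Fintype.card H : ℂ) • v := by
    intro v hv
    have : P v = ∑ h : H, ρ h v := by simp [P]
    rw [this, Finset.sum_congr rfl (fun h _ => (hv h : ρ h.1 v = v))]
    simp [Nat.cast_smul_eq_nsmul]
  have hc : (Fintype.card H : ℂ) ≠ 0 := by exact_mod_cast Fintype.card_ne_zero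
  have hPmem : ∀ v, P v ∈ I := by
    intro v h
    have := LinearMap.congr_fun (hPl h.1 h.2) v
    exact this
  -- cyclicity
  have hcyc : ∀ v ∈ I, v ≠ 0 → ∀ J : Submodule ℂ V, (∀ g, P (ρ g v) ∈ J) → I ≤ J := by
    intro v hv hv0 J hJ
    have htop : Submodule.span ℂ (Set.range fun g => ρ g v) = ⊤ := by
      apply hirr
      · intro g u hu
        induction hu using Submodule.span_induction with
        | mem x hx =>
          obtain ⟨y, rfl⟩ := hx
          refine Submodule.subset_span ⟨g * y, ?_⟩
          simp
        | zero => simp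
        | add x y _ _ hx hy => rw [map_add]; exact add_mem hx hy
        | smul c x _ hx => rw [map_smul]; exact Submodule.smul_mem _ _ hx
      · intro hb
        apply hv0
        have : v ∈ Submodule.span ℂ (Set.range fun g => ρ g v) :=
          Submodule.subset_span ⟨1, by simp⟩
        rw [hb] at this
        simpa using this
    have hall : ∀ u, P u ∈ J := by
      intro u
      have hu : u ∈ Submodule.span ℂ (Set.range fun g => ρ g v) := by rw [htop]; trivial
      induction hu using Submodule.span_induction with
      | mem x hx => obtain ⟨y, rfl⟩ := hx; exact hJ y
      | zero => simp
      | add x y _ _ hx hy => rw [map_add]; exact add_mem hx hy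
      | smul c x _ hx => rw [map_smul]; exact Submodule.smul_mem _ _ hx
    intro w hw
    have := hall ((Fintype.card H : ℂ)⁻¹ • w)
    rwa [map_smul, hPI w hw, smul_smul, inv_mul_cancel₀ hc, one_smul] at this
  by_cases hbot : I = ⊥
  · rw [hbot]; simp
  obtain ⟨v, hv, hv0⟩ := Submodule.exists_mem_ne_zero_of_ne_bot hbot
  have hscal : ∀ g, ∃ c : ℂ, ∀ w ∈ I, P (ρ g w) = c • w := by
    intro g
    let T : Module.End ℂ I := (P * ρ g).restrict (p := I) (fun x _ => hPmem _)
    have : Nontrivial I := ⟨⟨⟨v, hv⟩, 0, fun h => hv0 (congrArg Subtype.val h)⟩⟩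
    obtain ⟨c, hcc⟩ := Module.End.exists_eigenvalue T
    obtain ⟨x, hx⟩ := hcc.exists_hasEigenvector
    have hx1 : P (ρ g x.1) = c • x.1 := congrArg Subtype.val hx.apply_eq_smul
    have hx0 : x.1 ≠ 0 := fun h => hx.2 (Subtype.ext h)
    refine ⟨c, ?_⟩
    have := hcyc x.1 x.2 hx0 (LinearMap.ker (P * ρ g - c • 1)) ?_
    · intro w hw
      have := this hw
      simpa [sub_eq_zero] using this
    · intro b
      have e := LinearMap.congr_fun (hcomm g b) ((Fintype.card H : ℂ)⁻¹ • x.1)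
      have hPx : P ((Fintype.card H : ℂ)⁻¹ • x.1) = x.1 := by
        rw [map_smul, hPI _ x.2, smul_smul, inv_mul_cancel₀ hc, one_smul]
      simp only [Module.End.mul_apply, hPx, hx1] at e
      simp only [map_smul] at e
      simp only [LinearMap.mem_ker, LinearMap.sub_apply, Module.End.mul_apply,
        LinearMap.smul_apply, Module.End.one_apply, sub_eq_zero]
      exact e
  refine finrank_le_one (⟨v, hv⟩ : I) fun w => ?_
  have := hcyc v hv hv0 (Submodule.span ℂ {v}) ?_ w.2
  · obtain ⟨c, hcw⟩ := Submodule.mem_span_singleton.1 this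
    exact ⟨c, Subtype.ext hcw⟩
  · intro g
    obtain ⟨c, h⟩ := hscal g
    rw [h v hv]
    exact Submodule.smul_mem _ _ (Submodule.mem_span_singleton_self v)
end
section
open Finset

theorem row_sum {X : Type} [Fintype X] [DecidableEq X] (c d : X → Fin 3) (i : Fin 3) :
    #{x | c x = i} = #{x | c x = i ∧ d x = 0} + #{x | c x = i ∧ d x = 1}
      + #{x | c x = i ∧ d x = 2} := by
  rw [Finset.card_eq_sum_card_fiberwise (f := d) (t := univ) (by simp)]
  simp [Fin.sum_univ_three, Finset.filter_filter]

theorem swap_perm {X : Type} [Fintype X] [DecidableEq X] (c d : X → Fin 3)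
    (hcd : ∀ i, #{x | c x = i} = #{x | d x = i})
    (h01 : #{x | c x = 0 ∧ d x = 1} = #{x | c x = 1 ∧ d x = 0}) :
    ∃ s : Equiv.Perm X, (∀ x, c (s x) = d x) ∧ ∀ x, d (s x) = c x := by
  have comm : ∀ i j, #{x | d x = i ∧ c x = j} = #{x | c x = j ∧ d x = i} := by
    intro i j; congr 1; ext x; simp [and_comm]
  have hN : ∀ i j, #{x | c x = i ∧ d x = j} = #{x | d x = i ∧ c x = j} := by
    have r0 := row_sum c d 0
    have r1 := row_sum c d 1
    have r2 := row_sum c d 2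
    have s0 := row_sum d c 0
    have s1 := row_sum d c 1
    have s2 := row_sum d c 2
    have e0 := hcd 0
    have e1 := hcd 1
    have e2 := hcd 2
    simp only [comm] at *
    intro i j
    fin_cases i <;> fin_cases j <;> simp <;> omega
  have e : ∀ p : Fin 3 × Fin 3, Nonempty ({a // (d a, c a) = p} ≃ {b // (c b, d b) = p}) := by
    rintro ⟨i, j⟩
    refine ⟨Fintype.equivOfCardEq ?_⟩
    simp only [Fintype.card_subtype, Prod.mk.injEq]
    exact (hN i j).symm
  refine ⟨Equiv.ofFiberEquiv (f := fun a => (d a, c a)) (g := fun a => (c a, d a))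
    fun p => (e p).some, ?_, ?_⟩ <;> intro x
  · exact congrArg Prod.fst (Equiv.ofFiberEquiv_map (f := fun a => (d a, c a))
      (g := fun a => (c a, d a)) (fun p => (e p).some) x)
  · exact congrArg Prod.snd (Equiv.ofFiberEquiv_map (f := fun a => (d a, c a))
      (g := fun a => (c a, d a)) (fun p => (e p).some) x)

theorem swap_perm' {X : Type} [Fintype X] [DecidableEq X] (c d : X → Fin 3)
    (hcd : ∀ i, #{x | c x = i} = #{x | d x = i})
    (h0 : #{x | c x = 0} = 1) (h12 : #{x | c x = 1} = #{x | c x = 2}) :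
    ∃ τ : Equiv.Perm (Fin 3), (τ = 1 ∨ τ = Equiv.swap 1 2) ∧
    ∃ s : Equiv.Perm X, (∀ x, c (s x) = τ (d x)) ∧ ∀ x, τ (d (s x)) = c x := by
  by_cases h : #{x | c x = 0 ∧ d x = 1} = #{x | c x = 1 ∧ d x = 0}
  · exact ⟨1, Or.inl rfl, swap_perm c d hcd h⟩
  · refine ⟨Equiv.swap 1 2, Or.inr rfl, swap_perm c (fun x => Equiv.swap 1 2 (d x)) ?_ ?_⟩
    · have t : ∀ i j : Fin 3, Equiv.swap 1 2 i = j ↔ i = Equiv.swap 1 2 j := by decide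
      simp only [t]
      intro i
      rw [← hcd]
      fin_cases i
      · rfl
      · exact h12
      · exact h12.symm
    · have t0 : ∀ i : Fin 3, Equiv.swap 1 2 i = 0 ↔ i = 0 := by decide
      have t1 : ∀ i : Fin 3, Equiv.swap 1 2 i = 1 ↔ i = 2 := by decide
      simp only [t0, t1]
      have r0 := row_sum c d 0
      have s0 := row_sum d c 0
      have e0 := hcd 0
      have comm : ∀ i j, #{x | d x = i ∧ c x = j} = #{x | c x = j ∧ d x = i} := by
        intro i j; congr 1; ext x; simp [and_comm]
      simp only [comm] at *
      omega

/-- colouring -/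
def col (k : ℕ) : Option (Fin (2 * k)) → Fin 3
  | none => 0
  | some i => if (i : ℕ) < k then 1 else 2

theorem col_eq_zero {k : ℕ} {x} : col k x = 0 ↔ x = none := by
  cases x with
  | none => simp [col]
  | some i => by_cases h : (i : ℕ) < k <;> simp [col, h]

theorem col_some_iff {k : ℕ} {i j : Fin (2 * k)} :
    col k (some i) = col k (some j) ↔ ((i : ℕ) < k ↔ (j : ℕ) < k) := by
  by_cases h : (i : ℕ) < k <;> by_cases h' : (j : ℕ) < k <;> simp [col, h, h']

theorem col_card_zero (k : ℕ) : #{x : Option (Fin (2 * k)) | col k x = 0} = 1 := by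
  rw [Finset.card_eq_one]
  refine ⟨none, ?_⟩
  ext x
  rw [Finset.mem_filter, Finset.mem_singleton, col_eq_zero]
  simp

theorem col_card_12 (k : ℕ) : #{x : Option (Fin (2 * k)) | col k x = 1} = #{x : Option (Fin (2 * k)) | col k x = 2} := by
  refine Finset.card_equiv (Equiv.optionCongr (Fin.revPerm (n := 2 * k))) ?_
  intro x
  rw [Finset.mem_filter, Finset.mem_filter]
  cases x with
  | none => simp [col]
  | some i =>
    have := i.2
    simp only [mem_univ, true_and, Equiv.optionCongr_apply, Option.map_some,
      Fin.revPerm_apply, col, Fin.val_rev]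
    split_ifs <;> first | omega | simp

theorem fixes_none {k : ℕ} (w : Equiv.Perm (Option (Fin (2 * k)))) (h : w none = none) :
    ∃ u : Equiv.Perm (Fin (2 * k)), w = u.optionCongr ∧ ∀ i, w (some i) = some (u i) := by
  have : w = (Equiv.removeNone w).optionCongr := by
    ext1 x
    cases x with
    | none => simp [h]
    | some i =>
      simp only [Equiv.optionCongr_apply, Option.map_some]
      rw [Equiv.removeNone_some]
      rw [← Option.ne_none_iff_exists']
      intro h'
      have := w.injective (h'.trans h.symm)
      simp at this
  refine ⟨_, this, fun i => ?_⟩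
  exact (Equiv.congr_fun this (some i)).trans rfl
end

section
open Equiv
theorem key (k : ℕ) (hk : 10 ≤ k) (K : Subgroup (Perm (Fin (2 * k))))
    (h1 : ∀ u : Perm (Fin (2 * k)), (∀ i, ((u i : ℕ) < k ↔ (i : ℕ) < k)) →
      Perm.sign u = 1 → u ∈ K)
    (h2 : ∀ u ∈ colorStab (fun i : Fin (2 * k) => ((i : ℕ) < k : Prop)), ∀ p q : Fin (2 * k), p ≠ q →
      ((p : ℕ) < k ↔ (q : ℕ) < k) → u ∈ K ∨ u * swap p q ∈ K) :
    IsMultFree (K.map (optionHom (Fin (2 * k)))) := by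
  intro V hV
  refine gelfand_lin _ V.ρ (fun U => simple_stable V U) ?_
  intro g
  have hcd : ∀ i, Finset.card {x : Option (Fin (2 * k)) | col k x = i} =
      Finset.card {x : Option (Fin (2 * k)) | col k (g⁻¹ x) = i} := by
    intro i
    refine Finset.card_equiv g ?_
    intro x
    simp
  obtain ⟨τ, hτ, s, hs1, hs2⟩ := swap_perm' (col k) (fun x => col k (g⁻¹ x)) hcd
    (col_card_zero k) (col_card_12 k)
  have hτ0 : τ 0 = 0 := by rcases hτ with rfl | rfl <;> decide
  -- squares
  have hsq : ∀ s : Perm (Option (Fin (2 * k))), (∀ x, col k (s x) = τ (col k (g⁻¹ x))) →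
      (∀ x, τ (col k (g⁻¹ (s x))) = col k x) → s * s ∈ K.map (optionHom (Fin (2 * k))) := by
    intro s hs1 hs2
    have hc : ∀ x, col k ((s * s) x) = col k x := fun x => by
      rw [Perm.mul_apply, hs1, hs2]
    obtain ⟨u, hu, hu'⟩ := fixes_none (s * s) (by rw [← col_eq_zero, hc]; rfl)
    refine ⟨u, h1 u ?_ ?_, hu.symm⟩
    · intro i
      rw [← col_some_iff, ← hu', hc]
    · rw [← optionCongr_sign, ← hu, map_mul, Int.units_mul_self]
  have hw : ∀ x, τ (col k ((g⁻¹ * s) x)) = col k x := hs2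
  obtain ⟨u, hu, hu'⟩ := fixes_none (g⁻¹ * s) (by
    rw [← col_eq_zero, ← τ.injective.eq_iff, hw, hτ0]; rfl)
  have huW : u ∈ colorStab (fun i : Fin (2 * k) => ((i : ℕ) < k : Prop)) := by
    intro i j
    simp only [eq_iff_iff]
    rw [← col_some_iff, ← col_some_iff, ← hw, ← hw (some j), τ.injective.eq_iff, hu', hu']
  -- pigeonhole
  obtain ⟨p, q, hpq, hf⟩ := Fintype.exists_ne_map_eq_of_card_lt
    (fun x : Option (Fin (2 * k)) => (col k x, col k (g⁻¹ x))) (by simp; omega)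
  simp only [Prod.mk.injEq] at hf
  obtain ⟨hf1, hf2⟩ := hf
  cases p with
  | none =>
    exact absurd (col_eq_zero.1 (hf1.symm.trans rfl)).symm hpq
  | some p =>
  cases q with
  | none =>
    exact absurd (col_eq_zero.1 (hf1.trans rfl)) hpq
  | some q =>
  have hpq' : p ≠ q := fun h => hpq (congrArg some h)
  rcases h2 u huW p q hpq' (col_some_iff.1 hf1) with h | h
  · refine ⟨g⁻¹ * s, ⟨u, h, hu.symm⟩, ?_⟩
    rw [mul_inv_cancel_left]
    exact hsq s hs1 hs2
  · refine ⟨g⁻¹ * (s * swap (some p) (some q)), ⟨u * swap p q, h, ?_⟩, ?_⟩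
    · rw [map_mul, ← mul_assoc, hu]
      congr 1
      exact optionCongr_swap p q
    rw [mul_inv_cancel_left]
    have t : ∀ f : Option (Fin (2 * k)) → Fin 3, f (some p) = f (some q) →
        ∀ x, f (swap (some p) (some q) x) = f x := by
      intro f hf x
      rw [swap_apply_def]
      split_ifs with h1 h2
      · rw [h1, hf]
      · rw [h2, hf]
      · rfl
    refine hsq _ ?_ ?_
    · intro x
      rw [Perm.mul_apply, hs1, t (fun x => col k (g⁻¹ x)) hf2]
    · intro x
      rw [Perm.mul_apply, hs2, t _ hf1]

theorem swap_lt {k : ℕ} {p q : Fin (2 * k)} (h : (p : ℕ) < k ↔ (q : ℕ) < k) (i : Fin (2 * k)) :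
    ((swap p q i : Fin (2 * k)) : ℕ) < k ↔ (i : ℕ) < k := by
  rw [swap_apply_def]
  split_ifs with h1 h2
  · rw [h1, h]
  · rw [h2, h]
  · rfl

theorem pres_mem {k : ℕ} {u : Perm (Fin (2 * k))} (h : ∀ i, ((u i : ℕ) < k ↔ (i : ℕ) < k)) :
    u ∈ colorStab (fun i : Fin (2 * k) => ((i : ℕ) < k : Prop)) := by
  intro i j
  simp only [eq_iff_iff, h]
end

theorem stmt7 (k : ℕ) (hk : 10 ≤ k)
    -- `W = S_k ≀ S_2`, the stabilizer of the pair of blocks `{1,…,k}`, `{k+1,…,2k}`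
    (W : Subgroup (Equiv.Perm (Fin (2 * k))))
    (hW : W = colorStab (fun i : Fin (2 * k) => ((i : ℕ) < k : Prop)))
    -- `Γₖ = {g ∈ W : sgn g = ψ g}`, where `ψ g = 1` iff `g` preserves the block `{1,…,k}`
    (Γ : Subgroup (Equiv.Perm (Fin (2 * k))))
    (hΓ : ∀ g : Equiv.Perm (Fin (2 * k)), g ∈ Γ ↔ g ∈ W ∧
      Equiv.Perm.sign g =
        (if ∀ i : Fin (2 * k), (i : ℕ) < k → ((g i : ℕ) < k) then 1 else -1)) :
    IsMultFree (W.map (optionHom (Fin (2 * k)))) ∧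
      IsMultFree ((W ⊓ alternatingGroup (Fin (2 * k))).map (optionHom (Fin (2 * k)))) ∧
      IsMultFree (Γ.map (optionHom (Fin (2 * k)))) := by
  subst hW
  refine ⟨key k hk _ ?_ ?_, key k hk _ ?_ ?_, key k hk _ ?_ ?_⟩
  · intro u h _
    exact pres_mem h
  · intro u hu p q _ _
    exact Or.inl hu
  · intro u h h'
    exact ⟨pres_mem h, Equiv.Perm.mem_alternatingGroup.2 h'⟩
  · intro u hu p q hpq hlt
    rcases Int.units_eq_one_or (Equiv.Perm.sign u) with h | h
    · exact Or.inl ⟨hu, Equiv.Perm.mem_alternatingGroup.2 h⟩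
    · refine Or.inr ⟨mul_mem hu (pres_mem (swap_lt hlt)), Equiv.Perm.mem_alternatingGroup.2 ?_⟩
      rw [map_mul, h, Equiv.Perm.sign_swap hpq]
      rfl
  · intro u h h'
    rw [hΓ]
    refine ⟨pres_mem h, ?_⟩
    rw [if_pos (fun i hi => (h i).2 hi), h']
  · intro u hu p q hpq hlt
    rw [hΓ, hΓ]
    have hiff : (∀ i : Fin (2 * k), (i : ℕ) < k → (((u * Equiv.swap p q) i : Fin (2 * k)) : ℕ) < k) ↔
        ∀ i : Fin (2 * k), (i : ℕ) < k → ((u i : ℕ) < k) := by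
      constructor
      · intro h i hi
        have := h (Equiv.swap p q i) ((swap_lt hlt i).2 hi)
        simpa using this
      · intro h i hi
        exact h _ ((swap_lt hlt i).2 hi)
    simp only [hiff, map_mul, Equiv.Perm.sign_swap hpq]
    have hm : u * Equiv.swap p q ∈ colorStab (fun i : Fin (2 * k) => ((i : ℕ) < k : Prop)) :=
      mul_mem hu (pres_mem (swap_lt hlt))
    rcases Int.units_eq_one_or (Equiv.Perm.sign u) with h | h <;> rw [h] <;> split_ifs <;>
      simp [hu, hm]
end
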